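/- arXiv:2510.08221 — 5 statements merged into one kernel-verified Lean document; each statement's English description precedes it below -/
import Mathlib

section
/- If M is a subnormal subgroup of a finite group G, χ ∈ Irr(G), and ψ is an irreducible constituent of the restriction χ_M, then cod(ψ) divides cod(χ). -/
open CategoryTheory

noncomputable def repKer {G : Type} [Group G] (V : FDRep ℂ G) : Subgroup G :=
  (Representation.asGroupHom V.ρ).ker

noncomputable def cod {G : Type} [Group G] (V : FDRep ℂ G) : ℕ :=
  (repKer V).index / Module.finrank ℂ V

/-- `M` is a subnormal subgroup of `G`: there is a chain
`M = s 0 ⊴ s 1 ⊴ ⋯ ⊴ s n = ⊤`. -/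
def IsSubnormal {G : Type*} [Group G] (M : Subgroup G) : Prop :=
  ∃ (n : ℕ) (s : Fin (n + 1) → Subgroup G), s 0 = M ∧ s (Fin.last n) = ⊤ ∧
    ∀ i : Fin n, s i.castSucc ≤ s i.succ ∧
      ((s i.castSucc).subgroupOf (s i.succ)).Normal

/-- The restriction of a representation of `G` to a subgroup `M`. -/
noncomputable def resRep {G : Type} [Group G] (M : Subgroup G) (V : FDRep ℂ G) :
    FDRep ℂ M :=
  FDRep.of ((V.ρ.comp M.subtype : M →* _) : Representation ℂ M V)


namespace CodProof

open Module

/-- Explicit irreducibility of a representation given as a monoid homomorphism. -/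
def Irr {G X : Type} [Group G] [AddCommGroup X] [Module ℂ X] (σ : G →* (X →ₗ[ℂ] X)) : Prop :=
  Nontrivial X ∧ ∀ S : Submodule ℂ X, (∀ g, ∀ x ∈ S, σ g x ∈ S) → S = ⊥ ∨ S = ⊤

lemma hom_inv_cancel {G X : Type} [Group G] [AddCommGroup X] [Module ℂ X]
    (σ : G →* (X →ₗ[ℂ] X)) (g : G) (x : X) : σ g⁻¹ (σ g x) = x := by
  rw [← Module.End.mul_apply, ← map_mul]; simp

lemma hom_inv_cancel' {G X : Type} [Group G] [AddCommGroup X] [Module ℂ X]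
    (σ : G →* (X →ₗ[ℂ] X)) (g : G) (x : X) : σ g (σ g⁻¹ x) = x := by
  rw [← Module.End.mul_apply, ← map_mul]; simp

lemma hom_mul {G X : Type} [Group G] [AddCommGroup X] [Module ℂ X]
    (σ : G →* (X →ₗ[ℂ] X)) (g h : G) (x : X) : σ (g * h) x = σ g (σ h x) := by
  rw [← Module.End.mul_apply, ← map_mul]

lemma schur {G X : Type} [Group G] [AddCommGroup X] [Module ℂ X] [FiniteDimensional ℂ X]
    {σ : G →* (X →ₗ[ℂ] X)} (h : Irr σ) (A : X →ₗ[ℂ] X) (hA : ∀ g x, A (σ g x) = σ g (A x)) :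
    ∃ c : ℂ, ∀ x, A x = c • x := by
  have := h.1
  obtain ⟨c, hc⟩ := Module.End.exists_eigenvalue (K := ℂ) (V := X) A
  refine ⟨c, fun x => ?_⟩
  have := h.2 (Module.End.eigenspace A c) (fun g x hx => by
    rw [Module.End.mem_eigenspace_iff] at hx ⊢
    rw [hA, hx, map_smul])
  rcases this with h1 | h1
  · exact absurd h1 hc
  · have : x ∈ Module.End.eigenspace A c := h1 ▸ Submodule.mem_top
    exact Module.End.mem_eigenspace_iff.1 this

/-- Schur with trace. -/
lemma schur_trace {G X : Type} [Group G] [AddCommGroup X] [Module ℂ X] [FiniteDimensional ℂ X]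
    {σ : G →* (X →ₗ[ℂ] X)} (h : Irr σ) (A : X →ₗ[ℂ] X) (hA : ∀ g x, A (σ g x) = σ g (A x)) (x : X) :
    A x = (LinearMap.trace ℂ X A / (finrank ℂ X : ℂ)) • x := by
  have := h.1
  obtain ⟨c, hc⟩ := schur h A hA
  have : A = c • LinearMap.id := by ext x; simpa using hc x
  have hd : (finrank ℂ X : ℂ) ≠ 0 := by exact_mod_cast (finrank_pos (R := ℂ) (M := X)).ne'
  rw [hc x, this, map_smul, LinearMap.trace_id, smul_eq_mul, mul_div_cancel_right₀ _ hd]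

/-- A nonzero map out of an irreducible module that is equivariant up to some twist is injective. -/
lemma inj_of_irr {G X Z : Type} [Group G] [AddCommGroup X] [Module ℂ X]
    [AddCommGroup Z] [Module ℂ Z]
    {σ : G →* (X →ₗ[ℂ] X)} (h : Irr σ) (A : X →ₗ[ℂ] Z) (B : G → (Z →ₗ[ℂ] Z))
    (hA : ∀ g x, A (σ g x) = B g (A x)) (h0 : A ≠ 0) : Function.Injective A := by
  rw [← LinearMap.ker_eq_bot]
  rcases h.2 (LinearMap.ker A) (fun g x hx => by
    rw [LinearMap.mem_ker] at hx ⊢; rw [hA, hx, map_zero]) with h1 | h1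
  · exact h1
  · exact absurd (LinearMap.ker_eq_top.1 h1) h0

lemma trace_integral {U : Type} [AddCommGroup U] [Module ℂ U] [FiniteDimensional ℂ U]
    (A : Module.End ℂ U) (n : ℕ) (hn : 0 < n) (hA : A ^ n = 1) :
    IsIntegral ℤ (LinearMap.trace ℂ U A) := by
  rw [Module.End.trace_eq_sum_roots_charpoly_of_splits (IsAlgClosed.splits _)]
  refine IsIntegral.multiset_sum fun c hc => ?_
  have hev : Module.End.HasEigenvalue A c := by
    rw [Module.End.hasEigenvalue_iff_isRoot_charpoly]
    exact (Polynomial.mem_roots'.1 hc).2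
  obtain ⟨v, hv⟩ := hev.exists_hasEigenvector
  have h1 := hv.pow_apply n
  rw [hA] at h1
  have h2 : c ^ n = 1 := by
    have : (c ^ n - 1) • v = 0 := by rw [sub_smul, ← h1]; simp
    rcases smul_eq_zero.1 this with h | h
    · exact sub_eq_zero.1 h
    · exact absurd h hv.2
  exact IsIntegral.of_pow hn (by rw [h2]; exact isIntegral_one)

/-- Integrality from a finite group acting. -/
lemma scalar_integral {Γ U : Type} [Group Γ] [Finite Γ] [AddCommGroup U] [Module ℂ U]
    [FiniteDimensional ℂ U] [Nontrivial U] (D : Γ →* Module.End ℂ U) {ι : Type} (s : Finset ι)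
    (γ : ι → Γ) (r : ℂ)
    (h : ∀ u, ∑ i ∈ s, LinearMap.trace ℂ U (D (γ i)⁻¹) • D (γ i) u = r • u) :
    IsIntegral ℤ r := by
  obtain ⟨u0, hu0⟩ := exists_ne (0 : U)
  let O := integralClosure ℤ ℂ
  have htr : ∀ g : Γ, LinearMap.trace ℂ U (D g) ∈ O := fun g =>
    trace_integral _ (orderOf g) (orderOf_pos g) (by rw [← map_pow, pow_orderOf_eq_one, map_one])
  let L : Submodule O U := Submodule.span O (Set.range fun g : Γ => D g u0)
  have hstab : ∀ g : Γ, ∀ u ∈ L, D g u ∈ L := by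
    intro g u hu
    induction hu using Submodule.span_induction with
    | mem x hx =>
      obtain ⟨k, rfl⟩ := hx
      exact Submodule.subset_span ⟨g * k, by simp [map_mul]⟩
    | zero => rw [map_zero]; exact L.zero_mem
    | add x y _ _ hx hy => rw [map_add]; exact L.add_mem hx hy
    | smul a x _ hx =>
      have : D g (a • x) = a • D g x := (D g).map_smul (a : ℂ) x
      rw [this]; exact L.smul_mem _ hx
  have hintegral : IsIntegral O r := by
    refine isIntegral_of_smul_mem_submodule L ?_ (Submodule.fg_span (Set.finite_range _)) r ?_
    · intro hL
      have : u0 ∈ L := Submodule.subset_span ⟨1, by simp⟩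
      rw [hL] at this
      exact hu0 ((Submodule.mem_bot O).1 this)
    · intro u hu
      rw [← h u]
      refine L.sum_mem fun i _ => ?_
      exact L.smul_mem (⟨_, htr (γ i)⁻¹⟩ : O) (hstab _ _ hu)
  exact isIntegral_trans (A := O) r hintegral

lemma dvd_of_integral (a b : ℕ) (hb : b ≠ 0) (h : IsIntegral ℤ ((a : ℂ) / b)) : b ∣ a := by
  have h1 : IsIntegral ℤ ((a : ℚ) / b) := by
    rw [← isIntegral_algebraMap_iff (A := ℚ) (B := ℂ) (algebraMap ℚ ℂ).injective]
    simpa using h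
  obtain ⟨z, hz⟩ := IsIntegrallyClosed.isIntegral_iff.1 h1
  have hb' : (b : ℚ) ≠ 0 := by exact_mod_cast hb
  have : (a : ℤ) = b * z := by
    have h2 : (z : ℚ) = a / b := by simpa using hz
    field_simp at h2
    have : (z : ℚ) * b = a := by linarith
    have h3 : z * (b : ℤ) = a := by exact_mod_cast this
    linarith
  exact_mod_cast Dvd.intro _ this.symm

/-- Twisting group. -/
def Gam {G W : Type} [Group G] [AddCommGroup W] [Module ℂ W] (N : Subgroup G) [N.Normal]
    (τ : N →* (W →ₗ[ℂ] W)) : Subgroup (G × (W ≃ₗ[ℂ] W)) where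
  carrier := {p | LinearMap.det (p.2 : W →ₗ[ℂ] W) = 1 ∧
    ∀ n y, p.2 (τ n y) = τ (MulAut.conjNormal p.1 n) (p.2 y)}
  one_mem' := by
    refine ⟨?_, fun n y => ?_⟩
    · exact LinearMap.det_id
    · simp
  mul_mem' := by
    rintro ⟨g, w⟩ ⟨g', w'⟩ ⟨h1, h2⟩ ⟨h1', h2'⟩
    refine ⟨?_, fun n y => ?_⟩
    · have : ((w * w' : W ≃ₗ[ℂ] W) : W →ₗ[ℂ] W) = (w : W →ₗ[ℂ] W) * (w' : W →ₗ[ℂ] W) := rfl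
      simp only [Prod.mk_mul_mk]
      rw [this, map_mul]
      simp only at h1 h1'
      rw [h1, h1', one_mul]
    · simp only [Prod.mk_mul_mk, LinearEquiv.mul_apply, map_mul, MulAut.mul_apply] at *
      rw [h2', h2]
  inv_mem' := by
    rintro ⟨g, w⟩ ⟨h1, h2⟩
    refine ⟨?_, fun n y => ?_⟩
    · have : ((w⁻¹ : W ≃ₗ[ℂ] W) : W →ₗ[ℂ] W) * (w : W →ₗ[ℂ] W) = 1 := by
        ext y; exact w.symm_apply_apply y
      have h3 := congrArg LinearMap.det this
      simp only at h1
      rw [map_mul, h1, mul_one, map_one] at h3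
      exact h3
    · simp only [Prod.inv_mk] at *
      apply w.injective
      rw [h2]
      have hw : ∀ z, w (w⁻¹ z) = z := fun z => w.apply_symm_apply z
      rw [hw, hw]
      congr 1
      simp

lemma Gam_finite {G W : Type} [Group G] [Finite G] [AddCommGroup W] [Module ℂ W]
    [FiniteDimensional ℂ W] (N : Subgroup G) [N.Normal]
    (τ : N →* (W →ₗ[ℂ] W)) (hτ : Irr τ) : Finite (Gam N τ) := by
  have := hτ.1
  have hd : 0 < finrank ℂ W := finrank_pos
  suffices h : (Gam N τ : Set (G × (W ≃ₗ[ℂ] W))).Finite from h.to_subtype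
  refine Set.Finite.of_finite_fibers Prod.fst (Set.toFinite _) ?_
  intro g _
  by_cases hne : ∃ w0, (g, w0) ∈ Gam N τ
  · obtain ⟨w0, hw0⟩ := hne
    have hfin : {c : ℂ | c ^ finrank ℂ W = 1}.Finite := by
      refine Set.Finite.subset (Polynomial.nthRootsFinset (finrank ℂ W) (1:ℂ)).finite_toSet ?_
      intro c hc
      simpa [Polynomial.mem_nthRootsFinset hd] using hc
    have hfin2 : {A : W →ₗ[ℂ] W | ∃ c ∈ {c : ℂ | c ^ finrank ℂ W = 1}, c • (w0 : W →ₗ[ℂ] W) = A}.Finite :=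
      hfin.image _
    refine Set.Finite.of_finite_image (f := fun p : G × (W ≃ₗ[ℂ] W) => (p.2 : W →ₗ[ℂ] W)) 
      (hfin2.subset ?_) ?_
    · rintro _ ⟨⟨g', w⟩, ⟨hw, rfl⟩, rfl⟩
      obtain ⟨c, hc⟩ := schur hτ ((w0⁻¹ * w : W ≃ₗ[ℂ] W) : W →ₗ[ℂ] W) (fun n y => by
        have := ((Gam N τ).mul_mem ((Gam N τ).inv_mem hw0) hw).2 n y
        simpa using this)
      have hw' : c • (w0 : W →ₗ[ℂ] W) = (w : W →ₗ[ℂ] W) := by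
        ext y
        have h1 : w0.symm (w y) = c • y := hc y
        have h2 := congrArg w0 h1
        rw [w0.apply_symm_apply, map_smul] at h2
        simp [h2]
      refine ⟨c, ?_, hw'⟩
      have h3 := congrArg LinearMap.det hw'
      rw [LinearMap.det_smul, hw0.1, hw.1, mul_one] at h3
      exact h3
    · rintro ⟨g1, w1⟩ ⟨_, h1⟩ ⟨g2, w2⟩ ⟨_, h2⟩ h
      simp only [Set.mem_preimage, Set.mem_singleton_iff] at h1 h2
      subst h1; 
      have : w1 = w2 := LinearEquiv.toLinearMap_injective h
      rw [this, h2]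
  · convert Set.finite_empty
    ext ⟨g', w⟩
    simp only [Set.mem_inter_iff, Set.mem_preimage, Set.mem_singleton_iff, Set.mem_empty_iff_false, iff_false]
    rintro ⟨h, rfl⟩
    exact hne ⟨w, h⟩

/-- Intertwiners from W to X. -/
def IU {G W X : Type} [Group G] [AddCommGroup W] [Module ℂ W] [AddCommGroup X] [Module ℂ X]
    (τ : G →* (W →ₗ[ℂ] W)) (σ : G →* (X →ₗ[ℂ] X)) : Submodule ℂ (W →ₗ[ℂ] X) where
  carrier := {f | ∀ n y, f (τ n y) = σ n (f y)}
  zero_mem' := by intro n y; simp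
  add_mem' := by intro a b ha hb n y; simp [ha n y, hb n y]
  smul_mem' := by intro c a ha n y; simp [ha n y]

section core
variable {G W X : Type} [Group G] [AddCommGroup W] [Module ℂ W] [AddCommGroup X] [Module ℂ X]
    (N : Subgroup G) [N.Normal] (τ : N →* (W →ₗ[ℂ] W)) (σ : G →* (X →ₗ[ℂ] X))

/-- Action of the twisting group on intertwiners. -/
def DD : Gam N τ →* Module.End ℂ (IU τ (σ.comp N.subtype)) where
  toFun p := 
    { toFun := fun f => ⟨σ p.1.1 ∘ₗ f.1 ∘ₗ (p.1.2.symm : W →ₗ[ℂ] W), by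
        intro n y
        have hinv := ((Gam N τ).inv_mem p.2).2 n y
        have h1 : p.1.2.symm (τ n y) = τ (MulAut.conjNormal p.1.1⁻¹ n) (p.1.2.symm y) := hinv
        simp only [LinearMap.comp_apply, LinearEquiv.coe_coe]
        rw [h1, f.2]
        simp only [MonoidHom.comp_apply, Subgroup.coe_subtype, MulAut.conjNormal_apply]
        rw [← hom_mul, ← hom_mul]
        congr 2
        group⟩
      map_add' := by intro a b; ext y; simp
      map_smul' := by intro c a; ext y; simp }
  map_one' := by
    ext f y
    simp 
    rfl
  map_mul' := by
    intro p q
    ext f y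
    simp
    rfl

lemma DD_apply (p : Gam N τ) (f : IU τ (σ.comp N.subtype)) (y : W) :
    (DD N τ σ p f).1 y = σ p.1.1 (f.1 (p.1.2.symm y)) := rfl

end core

/-- Averaging over cosets gives a scalar. -/
lemma coset_avg {G X : Type} [Group G] [Finite G] [AddCommGroup X] [Module ℂ X]
    [FiniteDimensional ℂ X] (N : Subgroup G) [Fintype (G ⧸ N)] (σ : G →* (X →ₗ[ℂ] X)) (hσ : Irr σ)
    (B : X →ₗ[ℂ] X) (hB : ∀ n ∈ N, ∀ x, B (σ n x) = σ n (B x)) (x : X) :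
    ∑ c : G ⧸ N, σ c.out (B (σ c.out⁻¹ x)) =
      ((N.index : ℂ) * LinearMap.trace ℂ X B / (finrank ℂ X : ℂ)) • x := by
  let T : G → (X →ₗ[ℂ] X) := fun g => σ g ∘ₗ B ∘ₗ σ g⁻¹
  have hT : ∀ g, ∀ n ∈ N, T (g * n) = T g := by
    intro g n hn
    ext x
    simp only [T, LinearMap.comp_apply, mul_inv_rev, hom_mul]
    rw [hB _ (N.inv_mem hn), hom_inv_cancel']
  have hT2 : ∀ h (c : G ⧸ N), T (h • c).out = T (h * c.out) := by
    intro h c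
    have : h • c = ((h * c.out : G) : G ⧸ N) := by
      conv_lhs => rw [← QuotientGroup.out_eq' c]
      rfl
    rw [this]
    obtain ⟨n, hn⟩ := QuotientGroup.mk_out_eq_mul N (h * c.out)
    rw [hn, hT _ _ n.2]
  let A : X →ₗ[ℂ] X := ∑ c : G ⧸ N, T c.out
  have hA : ∀ h x, A (σ h x) = σ h (A x) := by
    intro h x
    simp only [A, LinearMap.sum_apply, map_sum]
    rw [← Equiv.sum_comp (MulAction.toPerm h : Equiv.Perm (G ⧸ N))]
    refine Finset.sum_congr rfl fun c _ => ?_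
    simp only [MulAction.toPerm_apply]
    rw [hT2]
    simp only [T, LinearMap.comp_apply, mul_inv_rev, hom_mul, hom_inv_cancel]
  have htr : LinearMap.trace ℂ X A = (N.index : ℂ) * LinearMap.trace ℂ X B := by
    have h1 : ∀ g, LinearMap.trace ℂ X (T g) = LinearMap.trace ℂ X B := by
      intro g
      have : T g = σ g * (B * σ g⁻¹) := rfl
      rw [this, LinearMap.trace_mul_comm, mul_assoc, ← map_mul]
      simp
    simp only [A, map_sum, h1]
    rw [Finset.sum_const, Finset.card_univ, nsmul_eq_mul, Subgroup.index, Nat.card_eq_fintype_card]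
  have := schur_trace hσ A hA x
  rw [htr] at this
  rw [← this]
  simp [A, T]

theorem core {G W X : Type} [Group G] [Finite G] [AddCommGroup W] [Module ℂ W]
    [FiniteDimensional ℂ W] [AddCommGroup X] [Module ℂ X] [FiniteDimensional ℂ X]
    (N : Subgroup G) [N.Normal] (τ : N →* (W →ₗ[ℂ] W)) (σ : G →* (X →ₗ[ℂ] X))
    (hσ : Irr σ) (hτ : Irr τ) (hU : ∃ f ∈ IU τ (σ.comp N.subtype), f ≠ 0) :
    finrank ℂ X ∣ N.index * finrank ℂ W := by
  classical
  have := Gam_finite N τ hτ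
  have := hσ.1
  have := hτ.1
  have := Fintype.ofFinite N
  have := Fintype.ofFinite (G ⧸ N)
  have hdW : (finrank ℂ W : ℂ) ≠ 0 := by exact_mod_cast (finrank_pos (R := ℂ) (M := W)).ne'
  have hdX : (finrank ℂ X : ℂ) ≠ 0 := by exact_mod_cast (finrank_pos (R := ℂ) (M := X)).ne'
  set r : ℂ := ((N.index * finrank ℂ W : ℕ) : ℂ) / (finrank ℂ X : ℂ) with hr
  suffices hintegral : IsIntegral ℤ r from
    dvd_of_integral _ _ (finrank_pos (R := ℂ) (M := X)).ne' hintegral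
  let σN := σ.comp N.subtype
  let U := IU τ σN
  let U' := IU σN τ
  have : Nontrivial U := by
    obtain ⟨f, hf, h0⟩ := hU
    exact ⟨⟨⟨f, hf⟩, 0, fun h => h0 (congrArg Subtype.val h)⟩⟩
  let β : U' →ₗ[ℂ] U →ₗ[ℂ] ℂ := LinearMap.mk₂ ℂ
    (fun q f => LinearMap.trace ℂ W (q.1 ∘ₗ f.1) / (finrank ℂ W : ℂ))
    (by intro a b c; simp [LinearMap.add_comp, add_div])
    (by intro a b c; simp [LinearMap.smul_comp, mul_div_assoc])
    (by intro a b c; simp [LinearMap.comp_add, add_div])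
    (by intro a b c; simp [LinearMap.comp_smul, mul_div_assoc])
  have hβ : ∀ (q : U') (f : U) y, q.1 (f.1 y) = β q f • y := by
    intro q f y
    exact schur_trace hτ (q.1 ∘ₗ f.1) (fun n y => by
      simp only [LinearMap.comp_apply]; rw [f.2 n y, q.2 n]) y
  have hβtr : ∀ (q : U') (f : U), LinearMap.trace ℂ X (f.1 ∘ₗ q.1) = finrank ℂ W * β q f := by
    intro q f
    rw [LinearMap.trace_comp_comm']
    simp only [β, LinearMap.mk₂_apply]
    field_simp
  have havg : ∀ (q : U') (f : U) x,
      ∑ c : G ⧸ N, σ c.out (f.1 (q.1 (σ c.out⁻¹ x))) = (r * β q f) • x := by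
    intro q f x
    have := coset_avg N σ hσ (f.1 ∘ₗ q.1) (fun n hn x => by
      simp only [LinearMap.comp_apply]
      have h1 : q.1 (σ n x) = τ ⟨n, hn⟩ (q.1 x) := q.2 ⟨n, hn⟩ x
      have h2 := f.2 ⟨n, hn⟩ (q.1 x)
      rw [h1, h2]; rfl) x
    rw [hβtr] at this
    simp only [LinearMap.comp_apply] at this
    rw [this]
    congr 1
    rw [hr]; push_cast; ring
  -- nondegeneracy
  have hβsurj : Function.Surjective β := by
    rw [← LinearMap.flip_injective_iff₂]
    rw [injective_iff_map_eq_zero]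
    intro f hf
    by_contra hf0
    have hinj : Function.Injective f.1 := inj_of_irr hτ f.1 (fun n => σN n) f.2
      (fun h => hf0 (Subtype.ext h))
    obtain ⟨q0, hq0⟩ := LinearMap.exists_leftInverse_of_injective f.1 (LinearMap.ker_eq_bot.2 hinj)
    let q : X →ₗ[ℂ] W := ∑ n : N, τ n ∘ₗ q0 ∘ₗ σN n⁻¹
    have hq : q ∈ U' := by
      intro m x
      simp only [q, LinearMap.sum_apply, map_sum]
      rw [← Equiv.sum_comp (Equiv.mulLeft m)]
      refine Finset.sum_congr rfl fun n _ => ?_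
      simp only [Equiv.coe_mulLeft, LinearMap.comp_apply, mul_inv_rev]
      rw [hom_mul τ, hom_mul σN, hom_inv_cancel]
    have h1 : ∀ y, q (f.1 y) = (Fintype.card N : ℂ) • y := by
      intro y
      simp only [q, LinearMap.sum_apply, LinearMap.comp_apply]
      have : ∀ n : N, τ n (q0 (σN n⁻¹ (f.1 y))) = y := by
        intro n
        rw [← f.2 n⁻¹ y]
        have : q0 (f.1 (τ n⁻¹ y)) = τ n⁻¹ y := LinearMap.congr_fun hq0 _
        rw [this, hom_inv_cancel']
      simp only [this, Finset.sum_const, Finset.card_univ, Nat.cast_smul_eq_nsmul]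
    obtain ⟨y, hy⟩ := exists_ne (0 : W)
    have h2 := hβ ⟨q, hq⟩ f y
    have h3 : β ⟨q, hq⟩ f = 0 := LinearMap.congr_fun hf ⟨q, hq⟩
    rw [h3, zero_smul] at h2
    have h4 := h1 y
    simp only at h2
    rw [h2] at h4
    rcases smul_eq_zero.1 h4.symm with h | h
    · exact Fintype.card_ne_zero (α := N) (by exact_mod_cast h)
    · exact hy h
  let good : G ⧸ N → Prop := fun c => ∃ w, (c.out, w) ∈ Gam N τ
  let γ : G ⧸ N → Gam N τ := fun c => if h : good c then ⟨(c.out, h.choose), h.choose_spec⟩ else 1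
  have hγ : ∀ c, good c → (γ c).1.1 = c.out := by
    intro c h; simp [γ, h]
  -- twisted intertwiners
  have htw : ∀ (q : U') (f : U) (g : G) n y,
      q.1 (σ g⁻¹ (f.1 (τ n y))) = τ (MulAut.conjNormal g⁻¹ n) (q.1 (σ g⁻¹ (f.1 y))) := by
    intro q f g n y
    rw [f.2 n y, ← q.2]
    congr 1
    simp only [σN, MonoidHom.comp_apply, Subgroup.coe_subtype, MulAut.conjNormal_apply]
    rw [← hom_mul, ← hom_mul]
    congr 2
    group
  have hbad : ∀ (q : U') (f : U) c, ¬ good c → ∀ y, q.1 (σ c.out⁻¹ (f.1 y)) = 0 := by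
    intro q f c hc
    by_contra hne
    push Not at hne
    obtain ⟨y0, hy0⟩ := hne
    let A : W →ₗ[ℂ] W := q.1 ∘ₗ σ c.out⁻¹ ∘ₗ f.1
    have hA : ∀ n y, A (τ n y) = τ (MulAut.conjNormal c.out⁻¹ n) (A y) := htw q f c.out
    have hAinj : Function.Injective A := inj_of_irr hτ A (fun n => τ (MulAut.conjNormal c.out⁻¹ n)) hA
      (fun h => hy0 (LinearMap.congr_fun h y0))
    let w : W ≃ₗ[ℂ] W := (LinearEquiv.ofInjectiveEndo A hAinj).symm
    have hwA : ∀ y, w (A y) = y := fun y => (LinearEquiv.ofInjectiveEndo A hAinj).symm_apply_apply y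
    have hAw : ∀ y, A (w y) = y := fun y => (LinearEquiv.ofInjectiveEndo A hAinj).apply_symm_apply y
    have hdet : LinearMap.det (w : W →ₗ[ℂ] W) ≠ 0 := (LinearEquiv.isUnit_det' w).ne_zero
    obtain ⟨z, hz⟩ := IsAlgClosed.exists_pow_nat_eq (LinearMap.det (w : W →ₗ[ℂ] W))⁻¹
      (finrank_pos (R := ℂ) (M := W))
    have hz0 : z ≠ 0 := by
      rintro rfl
      rw [zero_pow (finrank_pos (R := ℂ) (M := W)).ne'] at hz
      exact inv_ne_zero hdet hz.symm
    refine hc ⟨(LinearEquiv.smulOfNeZero ℂ W z hz0) * w, ?_, ?_⟩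
    · have : (((LinearEquiv.smulOfNeZero ℂ W z hz0) * w : W ≃ₗ[ℂ] W) : W →ₗ[ℂ] W)
        = z • (w : W →ₗ[ℂ] W) := by ext y; rfl
      simp only
      rw [this, LinearMap.det_smul, hz, inv_mul_cancel₀ hdet]
    · intro n y
      have hw2 : ∀ n y, w (τ n y) = τ (MulAut.conjNormal c.out n) (w y) := by
        intro n y
        apply hAinj
        rw [hAw, hA, hAw]
        congr 2
        simp
      change z • w (τ n y) = τ _ (z • w y)
      rw [hw2, map_smul]
  have hkey : ∀ (q : U') (f f' : U),
      ∑ c ∈ Finset.univ.filter good, β q (DD N τ σ (γ c)⁻¹ f') • DD N τ σ (γ c) f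
        = (r * β q f) • f' := by
    intro q f f'
    apply Subtype.ext
    ext y
    have h0 := havg q f (f'.1 y)
    rw [← Finset.sum_filter_add_sum_filter_not Finset.univ good] at h0
    have hz : ∑ c ∈ Finset.univ.filter (fun c => ¬ good c),
        σ c.out (f.1 (q.1 (σ c.out⁻¹ (f'.1 y)))) = 0 := by
      refine Finset.sum_eq_zero fun c hc => ?_
      rw [hbad q f' c (Finset.mem_filter.1 hc).2, map_zero, map_zero]
    rw [hz, add_zero] at h0
    rw [Submodule.coe_smul, LinearMap.smul_apply, ← h0]
    rw [Submodule.coe_sum, LinearMap.sum_apply]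
    refine Finset.sum_congr rfl fun c hc => ?_
    have hg := hγ c (Finset.mem_filter.1 hc).2
    rw [Submodule.coe_smul, LinearMap.smul_apply, DD_apply, hg]
    rw [← map_smul, ← map_smul]
    congr 2
    rw [← hβ]
    congr 1
    rw [DD_apply]
    change σ (γ c).1.1⁻¹ (f'.1 ((γ c).1.2 ((γ c).1.2.symm y))) = _
    rw [hg, LinearEquiv.apply_symm_apply]
  have hfin : ∀ f : U, ∑ c ∈ Finset.univ.filter good,
      LinearMap.trace ℂ U (DD N τ σ (γ c)⁻¹) • DD N τ σ (γ c) f = r • f := by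
    intro f
    let b := Module.finBasis ℂ U
    choose q hq using fun i => hβsurj (b.coord i)
    have htr : ∀ A : Module.End ℂ U, LinearMap.trace ℂ U A = ∑ i, β (q i) (A (b i)) := by
      intro A
      rw [LinearMap.trace_eq_matrix_trace ℂ b, Matrix.trace]
      refine Finset.sum_congr rfl fun i _ => ?_
      rw [hq]
      simp [LinearMap.toMatrix_apply]
    simp only [htr, Finset.sum_smul]
    rw [Finset.sum_comm]
    simp only [hkey]
    simp only [hq]
    conv_rhs => rw [← b.sum_repr f, Finset.smul_sum]
    simp [mul_smul]
  exact scalar_integral (DD N τ σ) (Finset.univ.filter good) γ r hfin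

/-- Restriction to an invariant subspace. -/
def restr {G X : Type} [Group G] [AddCommGroup X] [Module ℂ X]
    (σ : G →* (X →ₗ[ℂ] X)) (Y : Submodule ℂ X) (hY : ∀ g, ∀ x ∈ Y, σ g x ∈ Y) :
    G →* (Y →ₗ[ℂ] Y) where
  toFun g := (σ g).restrict (hY g)
  map_one' := by ext y; simp
  map_mul' := by intro a b; ext y; simp

lemma restr_apply {G X : Type} [Group G] [AddCommGroup X] [Module ℂ X]
    (σ : G →* (X →ₗ[ℂ] X)) (Y : Submodule ℂ X) (hY : ∀ g, ∀ x ∈ Y, σ g x ∈ Y) (g : G) (y : Y) :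
    (restr σ Y hY g y : X) = σ g y := rfl

/-- Codegree of a representation. -/
noncomputable def codR {G X : Type} [Group G] [AddCommGroup X] [Module ℂ X]
    (σ : G →* (X →ₗ[ℂ] X)) : ℕ := σ.ker.index / finrank ℂ X

lemma dim_dvd {G X : Type} [Group G] [Finite G] [AddCommGroup X] [Module ℂ X]
    [FiniteDimensional ℂ X] (σ : G →* (X →ₗ[ℂ] X)) (hσ : Irr σ) :
    finrank ℂ X ∣ σ.ker.index := by
  have := hσ.1
  obtain ⟨x, hx⟩ := exists_ne (0 : X)
  have := core (W := ℂ) σ.ker 1 σ hσ ⟨inferInstance, fun S _ => eq_bot_or_eq_top (α := Ideal ℂ) S⟩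
    ⟨LinearMap.toSpanSingleton ℂ X x, by
      intro n y
      have : σ n = 1 := n.2
      simp [this], by
      intro h
      apply hx
      simpa using LinearMap.congr_fun h 1⟩
  simpa using this

lemma one_step {H G W X : Type} [Group H] [Finite H] [Group G] [Finite G]
    [AddCommGroup W] [Module ℂ W] [FiniteDimensional ℂ W] [AddCommGroup X] [Module ℂ X]
    [FiniteDimensional ℂ X] (j : H →* G) (hj : j.range.Normal)
    (σ : G →* (X →ₗ[ℂ] X)) (hσ : Irr σ) (τ : H →* (W →ₗ[ℂ] W)) (hτ : Irr τ)
    (φ : W →ₗ[ℂ] X) (hφ : ∀ h y, φ (τ h y) = σ (j h) (φ y)) (h0 : φ ≠ 0) :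
    codR τ ∣ codR σ := by
  have hinj : Function.Injective φ := inj_of_irr hτ φ (fun h => σ (j h)) hφ h0
  have := hτ.1
  have := hσ.1
  let K := σ.ker
  let N := j.range ⊔ K
  let Y := LinearMap.range φ
  have hYinv : ∀ n : N, ∀ x ∈ Y, (σ.comp N.subtype) n x ∈ Y := by
    rintro ⟨n, hn⟩ _ ⟨y, rfl⟩
    obtain ⟨_, ⟨h, rfl⟩, k, hk, rfl⟩ := (Subgroup.mem_sup_of_normal_right).1 hn
    have hk' : σ k = 1 := hk
    refine ⟨τ h y, ?_⟩
    simp [hφ, hk']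
  let e : W ≃ₗ[ℂ] Y := LinearEquiv.ofInjective φ hinj
  have hYirr : Irr (restr (σ.comp N.subtype) Y hYinv) := by
    refine ⟨e.symm.toEquiv.nontrivial, fun S hS => ?_⟩
    rcases hτ.2 (S.comap (e : W →ₗ[ℂ] Y)) (fun h y hy => by
      rw [Submodule.mem_comap] at hy ⊢
      have h1 := hS ⟨j h, Subgroup.mem_sup_left ⟨h, rfl⟩⟩ _ hy
      convert h1 using 1
      apply Subtype.ext
      rw [restr_apply]
      exact hφ h y) with h | h
    · left
      rw [eq_bot_iff]
      intro s hs
      have : e.symm s ∈ S.comap (e : W →ₗ[ℂ] Y) := by simpa using hs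
      rw [h, Submodule.mem_bot] at this
      simpa using this
    · right
      rw [eq_top_iff]
      intro s _
      have : e.symm s ∈ S.comap (e : W →ₗ[ℂ] Y) := h ▸ Submodule.mem_top
      simpa using this
  have hcore := core N (restr (σ.comp N.subtype) Y hYinv) σ hσ hYirr
    ⟨Y.subtype, fun n y => rfl, by
      intro h
      have := hYirr.1
      obtain ⟨y, hy⟩ := exists_ne (0 : Y)
      exact hy (Subtype.ext (LinearMap.congr_fun h y))⟩
  rw [← e.finrank_eq] at hcore
  obtain ⟨r, hr⟩ := hcore
  obtain ⟨a, ha⟩ := dim_dvd σ hσ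
  obtain ⟨b, hb⟩ := dim_dvd τ hτ
  have hdX : 0 < finrank ℂ X := finrank_pos
  have hdW : 0 < finrank ℂ W := finrank_pos
  have hca : codR σ = a := by rw [codR, ha, Nat.mul_div_cancel_left _ hdX]
  have hcb : codR τ = b := by rw [codR, hb, Nat.mul_div_cancel_left _ hdW]
  have h1 : K.relIndex N * N.index = K.index := Subgroup.relIndex_mul_index le_sup_right
  have h2 : K.relIndex N = K.relIndex j.range := Subgroup.relIndex_sup_right _ _
  have h3 : (K.comap j).index = K.relIndex j.range := Subgroup.index_comap _ _
  have h4 : K.comap j ≤ τ.ker := by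
    intro h hh
    have hk : σ (j h) = 1 := hh
    rw [MonoidHom.mem_ker]
    ext y
    apply hinj
    rw [hφ, hk]; rfl
  obtain ⟨s, hs⟩ := Subgroup.index_dvd_of_le h4
  rw [hca, hcb]
  refine ⟨s * r, ?_⟩
  apply Nat.eq_of_mul_eq_mul_left hdX
  have h5 : K.index = finrank ℂ X * a := ha
  rw [← h5, ← h1, h2, ← h3, hs, hb]
  calc _ = b * s * (N.index * finrank ℂ W) := by ring
    _ = _ := by rw [hr]; ring

lemma maschke {H X : Type} [Group H] [Finite H] [AddCommGroup X] [Module ℂ X]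
    (σ : H →* (X →ₗ[ℂ] X)) (S : Submodule ℂ X) (hS : ∀ g, ∀ x ∈ S, σ g x ∈ S) :
    ∃ P : X →ₗ[ℂ] X, (∀ h x, P (σ h x) = σ h (P x)) ∧ (∀ x, P x ∈ S) ∧ ∀ x ∈ S, P x = x := by
  have := Fintype.ofFinite H
  obtain ⟨q, hq⟩ := LinearMap.exists_leftInverse_of_injective S.subtype S.ker_subtype
  have hqs : ∀ x (hx : x ∈ S), (q x : X) = x := fun x hx =>
    congrArg Subtype.val (LinearMap.congr_fun hq ⟨x, hx⟩)
  have hcard : (Fintype.card H : ℂ) ≠ 0 := by exact_mod_cast Fintype.card_ne_zero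
  let A : X →ₗ[ℂ] X := ∑ h : H, σ h ∘ₗ (S.subtype ∘ₗ q) ∘ₗ σ h⁻¹
  have hA : ∀ x, A x = ∑ h : H, σ h (q (σ h⁻¹ x) : X) := by
    intro x; simp [A]
  refine ⟨(Fintype.card H : ℂ)⁻¹ • A, ?_, ?_, ?_⟩
  · intro m x
    rw [LinearMap.smul_apply, LinearMap.smul_apply, map_smul, hA, hA, map_sum,
      ← Equiv.sum_comp (Equiv.mulLeft m)]
    congr 1
    refine Finset.sum_congr rfl fun n _ => ?_
    simp only [Equiv.coe_mulLeft, mul_inv_rev]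
    rw [hom_mul, hom_mul, hom_inv_cancel]
  · intro x
    rw [LinearMap.smul_apply, hA]
    exact S.smul_mem _ (S.sum_mem fun h _ => hS h _ (q _).2)
  · intro x hx
    rw [LinearMap.smul_apply, hA]
    have : ∀ h : H, σ h (q (σ h⁻¹ x) : X) = x := by
      intro h
      rw [hqs _ (hS _ _ hx), hom_inv_cancel']
    simp only [this, Finset.sum_const, Finset.card_univ]
    rw [← Nat.cast_smul_eq_nsmul ℂ, smul_smul, inv_mul_cancel₀ hcard, one_smul]

lemma exists_irr_sub {H X W : Type} [Group H] [Finite H] [AddCommGroup X] [Module ℂ X]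
    [FiniteDimensional ℂ X] [AddCommGroup W] [Module ℂ W]
    (σ : H →* (X →ₗ[ℂ] X)) (φ : W →ₗ[ℂ] X) (h0 : φ ≠ 0) :
    ∃ (Y : Submodule ℂ X) (hY : ∀ g, ∀ x ∈ Y, σ g x ∈ Y) (p : X →ₗ[ℂ] Y),
      Irr (restr σ Y hY) ∧ (∀ h x, p (σ h x) = restr σ Y hY h (p x)) ∧ p ∘ₗ φ ≠ 0 := by
  classical
  let Q : ℕ → Prop := fun n => ∃ (Y : Submodule ℂ X) (p : X →ₗ[ℂ] X),
    (∀ g, ∀ x ∈ Y, σ g x ∈ Y) ∧ (∀ h x, p (σ h x) = σ h (p x)) ∧ (∀ x, p x ∈ Y) ∧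
      p ∘ₗ φ ≠ 0 ∧ finrank ℂ Y = n
  have hQ : ∃ n, Q n := ⟨_, ⊤, LinearMap.id, fun _ _ _ => trivial, fun _ _ => rfl,
    fun _ => trivial, by simpa using h0, rfl⟩
  obtain ⟨Y, p, hY, hp, hpY, hpφ, hn⟩ := Nat.find_spec hQ
  have hmin : ∀ (Y' : Submodule ℂ X) (p' : X →ₗ[ℂ] X), (∀ g, ∀ x ∈ Y', σ g x ∈ Y') →
      (∀ h x, p' (σ h x) = σ h (p' x)) → (∀ x, p' x ∈ Y') → p' ∘ₗ φ ≠ 0 → ¬ Y' < Y := by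
    intro Y' p' h1 h2 h3 h4 hlt
    have := Nat.find_min hQ (m := finrank ℂ Y') (by rw [← hn]; exact Submodule.finrank_lt_finrank_of_lt hlt)
    exact this ⟨Y', p', h1, h2, h3, h4, rfl⟩
  have hpφ' : p.codRestrict Y hpY ∘ₗ φ ≠ 0 := by
    intro h
    apply hpφ
    ext y
    exact congrArg Subtype.val (LinearMap.congr_fun h y)
  refine ⟨Y, hY, p.codRestrict Y hpY, ⟨?_, ?_⟩, fun h x => Subtype.ext (hp h x), hpφ'⟩
  · by_contra hnt
    rw [not_nontrivial_iff_subsingleton] at hnt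
    exact hpφ' (by ext y; exact congrArg _ (Subsingleton.elim _ _))
  · intro S hS
    by_contra hne
    push Not at hne
    obtain ⟨hb, ht⟩ := hne
    let S' := S.map Y.subtype
    have hS' : ∀ g, ∀ x ∈ S', σ g x ∈ S' := by
      rintro g _ ⟨s, hs, rfl⟩
      exact ⟨restr σ Y hY g s, hS g s hs, rfl⟩
    obtain ⟨P, hP1, hP2, hP3⟩ := maschke σ S' hS'
    have hS'Y : S' ≤ Y := Submodule.map_subtype_le Y S
    by_cases hc : (P ∘ₗ p) ∘ₗ φ = 0
    · refine hmin (Y ⊓ LinearMap.ker P) ((LinearMap.id - P) ∘ₗ p) ?_ ?_ ?_ ?_ ?_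
      · rintro g x ⟨hx1, hx2⟩
        refine ⟨hY g x hx1, ?_⟩
        have : P x = 0 := hx2
        simp [hP1, this]
      · intro h x
        simp [hp, hP1]
      · intro x
        refine ⟨?_, ?_⟩
        · simp only [LinearMap.comp_apply, LinearMap.sub_apply, LinearMap.id_apply]
          exact Y.sub_mem (hpY x) (hS'Y (hP2 _))
        · simp [hP3 _ (hP2 (p x))]
      · intro h
        apply hpφ
        ext y
        have h1 := LinearMap.congr_fun h y
        have h2 := LinearMap.congr_fun hc y
        simp only [LinearMap.comp_apply, LinearMap.sub_apply, LinearMap.id_apply, LinearMap.zero_apply] at h1 h2 ⊢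
        rw [h2, sub_zero] at h1
        exact h1
      · refine lt_of_le_of_ne inf_le_left fun h => hb ?_
        rw [eq_bot_iff]
        intro s hs
        have hs' : (s : X) ∈ S' := ⟨s, hs, rfl⟩
        have h1 : (s : X) ∈ Y ⊓ LinearMap.ker P := h.ge s.2
        have h2 : P s = 0 := h1.2
        rw [hP3 _ hs'] at h2
        exact (Submodule.mem_bot ℂ).2 (Subtype.ext h2)
    · refine hmin S' (P ∘ₗ p) hS' ?_ (fun x => hP2 _) hc ?_
      · intro h x; simp [hp, hP1]
      · refine lt_of_le_of_ne hS'Y fun h => ht ?_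
        rw [eq_top_iff]
        intro y _
        have : (y : X) ∈ S' := h.ge y.2
        obtain ⟨s, hs, hsy⟩ := this
        have : s = y := Subtype.ext hsy
        exact this ▸ hs

lemma chain {G W : Type} [Group G] [Finite G] [AddCommGroup W] [Module ℂ W]
    [FiniteDimensional ℂ W] (n : ℕ) (s : Fin (n + 1) → Subgroup G)
    (hs : ∀ i : Fin n, s i.castSucc ≤ s i.succ ∧
      ((s i.castSucc).subgroupOf (s i.succ)).Normal)
    (M : Subgroup G) (hM : s 0 = M) (τ : M →* (W →ₗ[ℂ] W)) (hτ : Irr τ) (i : Fin (n + 1)) :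
    ∃ hle : M ≤ s i, ∀ (X : Type) [AddCommGroup X] [Module ℂ X] [FiniteDimensional ℂ X]
      (σ : s i →* (X →ₗ[ℂ] X)) (_ : Irr σ) (φ : W →ₗ[ℂ] X) (_ : φ ≠ 0)
      (_ : ∀ m y, φ (τ m y) = σ (Subgroup.inclusion hle m) (φ y)), codR τ ∣ codR σ := by
  induction i using Fin.induction with
  | zero =>
    refine ⟨hM.ge, fun X _ _ _ σ hσ φ h0 hφ => ?_⟩
    refine one_step (Subgroup.inclusion hM.ge) ?_ σ hσ τ hτ φ hφ h0
    rw [Subgroup.inclusion_range, ← hM, Subgroup.subgroupOf_self]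
    infer_instance
  | succ i ih =>
    obtain ⟨hle, ih⟩ := ih
    obtain ⟨hle2, hnor⟩ := hs i
    refine ⟨hle.trans hle2, fun X _ _ _ σ hσ φ h0 hφ => ?_⟩
    let j := Subgroup.inclusion hle2
    obtain ⟨Y, hY, p, hirr, hp, hpφ⟩ := exists_irr_sub (σ.comp j) φ h0
    have h1 := ih Y (restr (σ.comp j) Y hY) hirr (p ∘ₗ φ) hpφ (by
      intro m y
      rw [LinearMap.comp_apply, hφ, LinearMap.comp_apply, ← hp]
      rfl)
    have := hirr.1
    have h2 := one_step j (by rw [Subgroup.inclusion_range]; exact hnor) σ hσ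
      (restr (σ.comp j) Y hY) hirr Y.subtype (fun h y => rfl) (by
        intro h
        obtain ⟨y, hy⟩ := exists_ne (0 : Y)
        exact hy (Subtype.ext (LinearMap.congr_fun h y)))
    exact h1.trans h2

lemma irr_of_simple {G : Type} [Group G] (V : FDRep ℂ G) [Simple V] : Irr (X := V) V.ρ := by
  refine ⟨?_, fun S hS => ?_⟩
  · by_contra hnt
    rw [not_nontrivial_iff_subsingleton] at hnt
    apply id_nonzero V
    ext x
    exact Subsingleton.elim _ _
  · let SS : FDRep ℂ G := FDRep.of (restr V.ρ S hS)
    let i : SS ⟶ V := ⟨InducedCategory.homMk (ModuleCat.ofHom S.subtype), fun g => by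
      ext x; rfl⟩
    have hmono : Mono i := ⟨fun {Z} a b h => by
      ext x
      exact congrArg (fun k : Z ⟶ V => k.hom.hom.hom x) h⟩
    by_cases h0 : i = 0
    · left
      rw [eq_bot_iff]
      intro x hx
      exact congrArg (fun k : SS ⟶ V => k.hom.hom.hom ⟨x, hx⟩) h0
    · right
      have hiso : IsIso i := isIso_of_mono_of_nonzero h0
      rw [eq_top_iff]
      intro x _
      have h1 : (inv i ≫ i).hom.hom.hom x = x := by rw [IsIso.inv_hom_id]; rfl
      have h2 : (inv i ≫ i).hom.hom.hom x = ((inv i).hom.hom.hom x : S) := rfl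
      rw [← h1, h2]
      exact Subtype.property _

lemma cod_eq {G : Type} [Group G] (V : FDRep ℂ G) : cod V = codR (X := V) V.ρ := by
  have : repKer V = V.ρ.ker := by
    ext g
    rw [repKer, MonoidHom.mem_ker, MonoidHom.mem_ker, Units.ext_iff]
    rfl
  rw [cod, codR, this]

end CodProof

/-- If `M` is subnormal in `G`, `χ ∈ Irr G` and `ψ` is an irreducible
constituent of `χ|_M` (i.e. there is a nonzero `M`-homomorphism `ψ ⟶ χ|_M`),
then `cod ψ ∣ cod χ`. -/
theorem stmt3 {G : Type} [Group G] [Finite G] (M : Subgroup G) (hM : IsSubnormal M)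
    (V : FDRep ℂ G) [Simple V] (W : FDRep ℂ M) [Simple W]
    (hconst : ∃ f : W ⟶ resRep M V, f ≠ 0) :
    cod W ∣ cod V := by
  obtain ⟨n, s, h0, hl, hs⟩ := hM
  obtain ⟨f, hf⟩ := hconst
  rw [CodProof.cod_eq, CodProof.cod_eq]
  have hV := CodProof.irr_of_simple V
  have hW := CodProof.irr_of_simple W
  obtain ⟨hle, hc⟩ := CodProof.chain n s hs M h0 (W := W) W.ρ hW (Fin.last n)
  let j := (s (Fin.last n)).subtype
  have hσ : CodProof.Irr (X := V) (V.ρ.comp j) := by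
    refine ⟨hV.1, fun S hS => hV.2 S fun g x hx => ?_⟩
    exact hS ⟨g, hl ▸ Subgroup.mem_top g⟩ x hx
  let φ : W →ₗ[ℂ] V := f.hom.hom.hom
  have hφ0 : φ ≠ 0 := by
    intro h
    apply hf
    ext x
    exact LinearMap.congr_fun h x
  have h1 := hc V (V.ρ.comp j) hσ φ hφ0 (by
    intro m y
    have := congrArg (fun k => k.hom.hom y) (f.comm m)
    exact this)
  refine h1.trans (CodProof.one_step j ?_ (X := V) V.ρ hV (W := V) (V.ρ.comp j) hσ LinearMap.id
    (fun h y => rfl) ?_)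
  · rw [Subgroup.range_subtype, hl]; infer_instance
  · intro h
    have := hV.1
    obtain ⟨x, hx⟩ := exists_ne (0 : V)
    exact hx (LinearMap.congr_fun h x)
end

section
/- If a prime p divides the order of a finite group G, then p divides cod(χ) for some irreducible character χ of G. -/
open CategoryTheory

open Module

/-- Irreducible representations give simple objects. -/
theorem simple_of_irred {G : Type} [Group G] [Finite G] {V : Type} [AddCommGroup V] [Module ℂ V]
    [FiniteDimensional ℂ V] (ρ : Representation ℂ G V) (hρ : ρ.IsIrreducible) :
    Simple (FDRep.of ρ) := by
  have := Fintype.ofFinite G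
  rw [FDRep.simple_iff_char_is_norm_one]
  have := invertibleOfNonzero (NeZero.ne (Nat.card G : ℂ))
  have h := Representation.char_orthonormal ρ ρ
  rw [if_pos ⟨Representation.Equiv.refl ρ⟩] at h
  have h0 : (Nat.card G : ℂ) ≠ 0 := NeZero.ne _
  rw [inv_mul_eq_iff_eq_mul₀ h0, mul_one] at h
  exact h

/-- Values of characters of finite groups are algebraic integers. -/
theorem char_integral {G : Type} [Group G] [Finite G] {V : Type} [AddCommGroup V] [Module ℂ V]
    [FiniteDimensional ℂ V] (ρ : Representation ℂ G V) (g : G) :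
    IsIntegral ℤ (ρ.character g) := by
  unfold Representation.character
  have hs := Module.End.trace_eq_sum_roots_charpoly_of_splits (f := ρ g) (IsAlgClosed.splits _)
  rw [hs]
  apply IsIntegral.multiset_sum
  intro μ hμ
  have hμ' : Module.End.HasEigenvalue (ρ g) μ := by
    rw [Module.End.hasEigenvalue_iff_isRoot_charpoly]
    exact Polynomial.isRoot_of_mem_roots hμ
  obtain ⟨v, hv⟩ := hμ'.exists_hasEigenvector
  have h1 := hv.pow_apply (orderOf g)
  rw [← map_pow, pow_orderOf_eq_one, map_one] at h1
  have h2 : (μ ^ orderOf g - 1) • v = 0 := by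
    rw [sub_smul, ← h1]; simp
  have h3 : μ ^ orderOf g = 1 := by
    rcases smul_eq_zero.1 h2 with h | h
    · exact sub_eq_zero.1 h
    · exact absurd h hv.2
  exact IsIntegral.of_pow (orderOf_pos g) (h3 ▸ isIntegral_one)

theorem nat_dvd_aux (n d : ℕ) (hd : 0 < d) (h : ∀ k, d ^ k ∣ n ^ k * d) : d ∣ n := by
  obtain ⟨g, d', n', hg, hc, rfl, rfl⟩ := Nat.exists_coprime' (m := d) (n := n)
    (Nat.gcd_pos_of_pos_left _ hd)
  have hd' : 0 < d' := Nat.pos_of_mul_pos_right hd |> fun _ => by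
    rcases Nat.eq_zero_or_pos d' with h | h
    · simp [h] at hd
    · exact h
  have key : ∀ k, d' ^ k ∣ d' * g := by
    intro k
    have := h k
    rw [mul_pow, mul_pow, mul_right_comm] at this
    have := Nat.dvd_of_mul_dvd_mul_right (pow_pos hg k) this
    exact (Nat.Coprime.pow k k hc).dvd_of_dvd_mul_left this
  have h1 : d' = 1 := by
    by_contra hne
    have h2 : 2 ≤ d' := by omega
    have h3 := Nat.le_of_dvd hd (key (d' * g))
    have h4 := Nat.lt_pow_self (n := d' * g) (show 1 < d' by omega)
    omega
  subst h1
  simp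

theorem char_convolution {G : Type} [Group G] [Fintype G] {V : Type} [AddCommGroup V] [Module ℂ V]
    [FiniteDimensional ℂ V] (ρ : Representation ℂ G V) (hρ : ρ.IsIrreducible) (g : G) :
    (finrank ℂ V : ℂ) * ∑ h : G, ρ.character h⁻¹ * ρ.character (h * g) =
      Nat.card G * ρ.character g := by
  let T : V →ₗ[ℂ] V := ∑ h : G, ρ.character h⁻¹ • ρ h
  have hT : ∀ x : G, T ∘ₗ ρ x = ρ x ∘ₗ T := by
    intro x
    change T * ρ x = ρ x * T
    simp only [T, Finset.sum_mul, Finset.mul_sum, smul_mul_assoc, mul_smul_comm, ← map_mul]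
    refine Fintype.sum_equiv (MulAut.conj x⁻¹).toEquiv _ _ fun h => ?_
    simp only [MulEquiv.toEquiv_eq_coe, EquivLike.coe_coe, MulAut.conj_apply]
    congr 1
    · rw [← ρ.char_conj h⁻¹ x⁻¹]; congr 1; group
    · congr 1; group
  obtain ⟨c, hc⟩ := (Representation.IsIrreducible.algebraMap_intertwiningMap_bijective_of_isAlgClosed
    (ρ := ρ)).2 ⟨T, hT⟩
  have hc' : T = c • (1 : V →ₗ[ℂ] V) := by
    have := congrArg Representation.IntertwiningMap.toLinearMap hc
    exact this.symm
  have tr : ∀ y : G, ∑ h : G, ρ.character h⁻¹ * ρ.character (h * y) = c * ρ.character y := by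
    intro y
    have := congrArg (fun S => LinearMap.trace ℂ V (S * ρ y)) hc'
    simpa [T, Finset.sum_mul, ← map_mul, Representation.character] using this
  have h1 := tr 1
  have := invertibleOfNonzero (NeZero.ne (Nat.card G : ℂ))
  have h := Representation.char_orthonormal ρ ρ
  rw [if_pos ⟨Representation.Equiv.refl ρ⟩] at h
  have h0 : (Nat.card G : ℂ) ≠ 0 := NeZero.ne _
  rw [inv_mul_eq_iff_eq_mul₀ h0, mul_one] at h
  simp only [mul_one, mul_comm (ρ.character _⁻¹), Representation.char_one] at h1
  rw [h] at h1
  rw [tr, h1]; ring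

/-- Maschke: complement of `B` inside `U`. -/
theorem finrank_compl_add {G : Type} [Group G] [Finite G] {W : Type} [AddCommGroup W]
    [Module ℂ W] [FiniteDimensional ℂ W] (ρ : Representation ℂ G W) (B U : Subrepresentation ρ)
    (h : B.toSubmodule ≤ U.toSubmodule) : ∃ C : Subrepresentation ρ, C ≤ U ∧
      C.toSubmodule ⊓ B.toSubmodule = ⊥ ∧
      finrank ℂ U.toSubmodule = finrank ℂ B.toSubmodule + finrank ℂ C.toSubmodule := by
  have : Representation.IsSemisimpleRepresentation ρ := inferInstance
  obtain ⟨D, hD⟩ := exists_isCompl B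
  have h1 : B.toSubmodule ⊓ D.toSubmodule = ⊥ :=
    congrArg Subrepresentation.toSubmodule hD.inf_eq_bot
  have h2 : B.toSubmodule ⊔ D.toSubmodule = ⊤ :=
    congrArg Subrepresentation.toSubmodule hD.sup_eq_top
  refine ⟨U ⊓ D, inf_le_left, ?_, ?_⟩
  · rw [Subrepresentation.toSubmodule_inf, inf_assoc, inf_comm D.toSubmodule, h1, inf_bot_eq]
  · have h3 : B.toSubmodule ⊔ (U ⊓ D).toSubmodule = U.toSubmodule := by
      rw [Subrepresentation.toSubmodule_inf, inf_comm, ← sup_inf_assoc_of_le _ h, h2, top_inf_eq]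
    have h4 : B.toSubmodule ⊓ (U ⊓ D).toSubmodule = ⊥ := by
      rw [Subrepresentation.toSubmodule_inf, inf_left_comm, h1, inf_bot_eq]
    have := Submodule.finrank_sup_add_finrank_inf_eq B.toSubmodule (U ⊓ D).toSubmodule
    rw [h3, h4, finrank_bot] at this
    omega

theorem sum_cosets {G : Type} [Group G] [Fintype G] (K : Subgroup G) (F : G → ℂ)
    (hF : ∀ h, ∀ k ∈ K, F (h * k) = F h) [Fintype (G ⧸ K)] :
    ∑ h : G, F h = Nat.card K * ∑ q : G ⧸ K, F q.out := by
  classical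
  have := Fintype.ofFinite K
  have hb : Function.Bijective (fun x : (G ⧸ K) × K => x.1.out * (x.2 : G)) := by
    constructor
    · rintro ⟨q, k⟩ ⟨q', k'⟩ h
      dsimp only at h
      have h1 : q = q' := by
        have := congrArg (QuotientGroup.mk (s := K)) h
        rwa [QuotientGroup.mk_mul_of_mem _ k.2, QuotientGroup.mk_mul_of_mem _ k'.2,
          QuotientGroup.out_eq', QuotientGroup.out_eq'] at this
      subst h1
      have h2 := mul_left_cancel h
      rw [Subtype.ext h2]
    · intro g
      refine ⟨⟨(g : G ⧸ K), ⟨(g : G ⧸ K).out⁻¹ * g, ?_⟩⟩, by simp⟩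
      rw [← QuotientGroup.eq, QuotientGroup.out_eq']
  rw [← hb.sum_comp, Fintype.sum_prod_type, Finset.mul_sum]
  refine Finset.sum_congr rfl fun q _ => ?_
  rw [Finset.sum_congr rfl fun (k : K) _ => hF q.out k k.2]
  simp [Nat.card_eq_fintype_card]

theorem finrank_dvd_index {G : Type} [Group G] [Finite G] {V : Type} [AddCommGroup V] [Module ℂ V]
    [FiniteDimensional ℂ V] (ρ : Representation ℂ G V) (hρ : ρ.IsIrreducible) :
    finrank ℂ V ∣ (Representation.asGroupHom ρ).ker.index := by
  have := Fintype.ofFinite G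
  set K := (Representation.asGroupHom ρ).ker with hK
  have hmem : ∀ k ∈ K, ρ k = 1 := by
    intro k hk
    rw [hK, MonoidHom.mem_ker] at hk
    rw [← Representation.asGroupHom_apply, hk]; rfl
  have := Fintype.ofFinite (G ⧸ K)
  have hV : 0 < finrank ℂ V := by
    have : Nontrivial V := by
      by_contra hn
      rw [not_nontrivial_iff_subsingleton] at hn
      obtain ⟨a, b, hab⟩ := hρ.toNontrivial
      exact hab (SetLike.ext fun x => by
        rw [Subsingleton.elim x 0]
        exact ⟨fun _ => b.toSubmodule.zero_mem, fun _ => a.toSubmodule.zero_mem⟩)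
    exact finrank_pos
  have hd0 : (finrank ℂ V : ℂ) ≠ 0 := by exact_mod_cast hV.ne'
  have hconv : ∀ g, (finrank ℂ V : ℂ) * ∑ q : G ⧸ K, ρ.character q.out⁻¹ * ρ.character (q.out * g) =
      K.index * ρ.character g := by
    intro g
    have h1 := char_convolution ρ hρ g
    rw [sum_cosets K (fun h => ρ.character h⁻¹ * ρ.character (h * g)), ← K.card_mul_index] at h1
    · have h0 : (Nat.card K : ℂ) ≠ 0 := NeZero.ne _
      push_cast at h1
      apply mul_left_cancel₀ h0
      linear_combination h1
    · intro h k hk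
      have hk' := hmem k hk
      have hk2 := hmem k⁻¹ (K.inv_mem hk)
      simp only [Representation.character, mul_inv_rev, map_mul, hk', hk2, one_mul, mul_one]
  have key : ∀ k : ℕ, ∀ g, IsIntegral ℤ (((K.index : ℂ) / finrank ℂ V) ^ k * ρ.character g) := by
    intro k
    induction k with
    | zero => intro g; simpa using char_integral ρ g
    | succ k ih =>
      intro g
      have : ((K.index : ℂ) / finrank ℂ V) ^ (k + 1) * ρ.character g =
          ∑ q : G ⧸ K, ρ.character q.out⁻¹ *
            (((K.index : ℂ) / finrank ℂ V) ^ k * ρ.character (q.out * g)) := by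
        have h1 : ((K.index : ℂ) / finrank ℂ V) * ρ.character g =
            ∑ q : G ⧸ K, ρ.character q.out⁻¹ * ρ.character (q.out * g) := by
          field_simp
          rw [← hconv g]
        rw [pow_succ, mul_assoc, h1, Finset.mul_sum]
        exact Finset.sum_congr rfl fun q _ => by ring
      rw [this]
      exact IsIntegral.sum _ fun q _ => (char_integral ρ _).mul (ih _)
  apply nat_dvd_aux _ _ hV
  intro k
  have h1 := key k 1
  rw [Representation.char_one] at h1
  have h2 : IsIntegral ℤ (((K.index : ℚ) / finrank ℂ V) ^ k * finrank ℂ V) := by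
    rw [← isIntegral_algebraMap_iff (B := ℂ) (algebraMap ℚ ℂ).injective]
    simpa using h1
  obtain ⟨z, hz⟩ := IsIntegrallyClosed.isIntegral_iff.1 h2
  have hd1 : (finrank ℂ V : ℚ) ≠ 0 := by exact_mod_cast hV.ne'
  rw [← Int.natCast_dvd_natCast]
  refine ⟨z, ?_⟩
  have : ((K.index : ℚ)) ^ k * finrank ℂ V = (finrank ℂ V : ℚ) ^ k * z := by
    have hz' : (z : ℚ) = ((K.index : ℚ) / finrank ℂ V) ^ k * finrank ℂ V := hz
    rw [hz', div_pow]
    field_simp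
  exact_mod_cast this

/-- If all irreducible subrepresentations of `U` have dimension divisible by `p`, so has `U`. -/
theorem dvd_finrank_of_irred {G : Type} [Group G] [Finite G] {W : Type} [AddCommGroup W]
    [Module ℂ W] [FiniteDimensional ℂ W] (ρ : Representation ℂ G W) (p : ℕ) (n : ℕ) :
    ∀ U : Subrepresentation ρ, finrank ℂ U.toSubmodule ≤ n →
    (∀ S : Subrepresentation ρ, S ≤ U → S.toRepresentation.IsIrreducible →
      p ∣ finrank ℂ S.toSubmodule) → p ∣ finrank ℂ U.toSubmodule := by
  induction n with
  | zero => intro U hU _; rw [Nat.le_zero.1 hU]; exact dvd_zero _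
  | succ n ih =>
    intro U hU hS
    by_cases hirr : U.toRepresentation.IsIrreducible
    · exact hS U le_rfl hirr
    by_cases hn : Nontrivial (Subrepresentation U.toRepresentation)
    swap
    · have : finrank ℂ U.toSubmodule = 0 := by
        rw [not_nontrivial_iff_subsingleton] at hn
        have h := congrArg Subrepresentation.toSubmodule
          (Subsingleton.elim (⊥ : Subrepresentation U.toRepresentation) ⊤)
        have h' : (⊥ : Submodule ℂ U.toSubmodule) = ⊤ := h
        rw [← finrank_top, ← h', finrank_bot]
      rw [this]; exact dvd_zero _
    have : ∃ A : Subrepresentation U.toRepresentation, A ≠ ⊥ ∧ A ≠ ⊤ := by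
      by_contra hcon
      push Not at hcon
      exact hirr ⟨fun a => or_iff_not_imp_left.2 (hcon a)⟩
    obtain ⟨A, hA0, hA1⟩ := this
    let B : Subrepresentation ρ := ⟨A.toSubmodule.map U.toSubmodule.subtype, by
      rintro g _ ⟨v, hv, rfl⟩
      exact ⟨U.toRepresentation g v, A.apply_mem_toSubmodule g hv, rfl⟩⟩
    have hBU : B.toSubmodule ≤ U.toSubmodule := Submodule.map_subtype_le _ _
    have hBf : finrank ℂ B.toSubmodule = finrank ℂ A.toSubmodule :=
      Submodule.finrank_map_subtype_eq _ _
    have hA0' : A.toSubmodule ≠ ⊥ := fun h => hA0 (Subrepresentation.toSubmodule_injective h)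
    have hA1' : A.toSubmodule ≠ ⊤ := fun h => hA1 (Subrepresentation.toSubmodule_injective h)
    have hpos : 0 < finrank ℂ A.toSubmodule := by
      rw [Nat.pos_iff_ne_zero]; exact fun h => hA0' (Submodule.finrank_eq_zero.1 h)
    have hlt : finrank ℂ A.toSubmodule < finrank ℂ U.toSubmodule :=
      Submodule.finrank_lt hA1'
    have hadd := finrank_compl_add ρ B U hBU
    obtain ⟨C, hCU, hadd⟩ := hadd
    have hadd := hadd.2
    rw [hadd]
    exact dvd_add (ih B (by omega) fun S h => hS S (h.trans hBU))
      (ih C (by omega) fun S h => hS S (h.trans hCU))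

/-- The right regular representation on functions. -/
def regFun (G : Type) [Group G] : Representation ℂ G (G → ℂ) where
  toFun g := LinearMap.funLeft ℂ ℂ (fun x => x * g)
  map_one' := by ext; simp [LinearMap.funLeft]
  map_mul' g h := by
    refine LinearMap.ext fun f => funext fun x => ?_
    simp [LinearMap.funLeft, mul_assoc]

theorem regFun_apply {G : Type} [Group G] (g : G) (f : G → ℂ) (x : G) :
    regFun G g f x = f (x * g) := rfl

/-- Functions fixed by a normal subgroup. -/
def fixedFun {G : Type} [Group G] (H : Subgroup G) [hH : H.Normal] :
    Subrepresentation (regFun G) where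
  toSubmodule :=
    { carrier := {f | ∀ h ∈ H, ∀ x, f (x * h) = f x}
      add_mem' := fun ha hb h hh x => by simp [ha h hh x, hb h hh x]
      zero_mem' := fun h hh x => rfl
      smul_mem' := fun c f hf h hh x => by simp [hf h hh x] }
  apply_mem_toSubmodule := fun g f hf h hh x => by
    rw [regFun_apply, regFun_apply]
    have := hf (g⁻¹ * h * g) (by simpa using hH.conj_mem h hh g⁻¹) (x * g)
    rw [← this]; congr 1; group

theorem mem_fixedFun {G : Type} [Group G] (H : Subgroup G) [hH : H.Normal] (f : G → ℂ) :
    f ∈ (fixedFun H).toSubmodule ↔ ∀ h ∈ H, ∀ x, f (x * h) = f x := Iff.rfl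

theorem finrank_fixedFun {G : Type} [Group G] [Finite G] (H : Subgroup G) [hH : H.Normal] :
    finrank ℂ (fixedFun H).toSubmodule = H.index := by
  have := Fintype.ofFinite (G ⧸ H)
  let e : (fixedFun H).toSubmodule ≃ₗ[ℂ] (G ⧸ H → ℂ) :=
    { toFun := fun f q => f.1 q.out
      map_add' := fun _ _ => rfl
      map_smul' := fun _ _ => rfl
      invFun := fun f => ⟨fun x => f x, fun h hh x => by
        change f ((x * h : G) : G ⧸ H) = f x
        rw [QuotientGroup.mk_mul_of_mem _ hh]⟩
      left_inv := fun f => Subtype.ext <| funext fun x => by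
        have := f.2 ((x : G ⧸ H).out⁻¹ * x)
          (by rw [← QuotientGroup.eq, QuotientGroup.out_eq']) (x : G ⧸ H).out
        rw [mul_inv_cancel_left] at this
        exact this.symm
      right_inv := fun f => funext fun q => by
        change f ((q.out : G) : G ⧸ H) = f q
        rw [QuotientGroup.out_eq'] }
  rw [e.finrank_eq, finrank_fintype_fun_eq_card, Subgroup.index, Nat.card_eq_fintype_card]

/-- If a prime `p` divides `|G|`, then `p` divides `cod χ` for some
irreducible character `χ` of `G`. -/
theorem stmt4 {G : Type} [Group G] [Finite G] {p : ℕ} (hp : p.Prime)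
    (hdvd : p ∣ Nat.card G) :
    ∃ V : FDRep ℂ G, Simple V ∧ p ∣ cod V := by
  by_contra hcon
  push Not at hcon
  have : Fact p.Prime := ⟨hp⟩
  obtain ⟨N, hN⟩ := (Set.toFinite {N : Subgroup G | N.Normal ∧ p ∣ N.index}).exists_maximal
    ⟨⊥, inferInstance, by simpa using hdvd⟩
  obtain ⟨⟨hNn, hNp⟩, hNmax⟩ := hN
  obtain ⟨q, hq⟩ := exists_prime_orderOf_dvd_card' (G := G ⧸ N) p hNp
  obtain ⟨g, rfl⟩ := QuotientGroup.mk_surjective q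
  have hgN : g ∉ N := by
    intro h
    rw [(QuotientGroup.eq_one_iff g).2 h, orderOf_one] at hq
    exact hp.one_lt.ne hq
  have hgp : g ^ p ∈ N := by
    rw [← QuotientGroup.eq_one_iff, QuotientGroup.mk_pow, ← hq, pow_orderOf_eq_one]
  let M : Subgroup G := Subgroup.normalClosure (insert g (N : Set G))
  have hMn : M.Normal := Subgroup.normalClosure_normal
  have hNM : N ≤ M := fun x hx => Subgroup.subset_normalClosure (Set.mem_insert_of_mem _ hx)
  have hgM : g ∈ M := Subgroup.subset_normalClosure (Set.mem_insert _ _)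
  have hMp : ¬ p ∣ M.index := fun h => hgN (hNmax ⟨hMn, h⟩ hNM hgM)
  have hle : (fixedFun M).toSubmodule ≤ (fixedFun N).toSubmodule :=
    fun f hf h hh x => hf h (hNM hh) x
  obtain ⟨C, hCN, hCM, hadd⟩ := finrank_compl_add (regFun G) _ _ hle
  rw [finrank_fixedFun, finrank_fixedFun] at hadd
  refine hMp ((Nat.dvd_add_left ?_).1 (hadd ▸ hNp))
  refine dvd_finrank_of_irred (regFun G) p _ C le_rfl fun S hSC hS => ?_
  have hsimple := simple_of_irred S.toRepresentation hS
  have hcod := hcon _ hsimple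
  obtain ⟨e, he⟩ := finrank_dvd_index S.toRepresentation hS
  have hcod' : ¬ p ∣ (Representation.asGroupHom S.toRepresentation).ker.index /
    finrank ℂ S.toSubmodule := hcod
  set K := (Representation.asGroupHom S.toRepresentation).ker with hK
  have hmem : ∀ k, k ∈ K ↔ ∀ f ∈ S.toSubmodule, ∀ x, f (x * k) = f x := by
    intro k
    rw [hK, MonoidHom.mem_ker, Units.ext_iff, Representation.asGroupHom_apply]
    constructor
    · intro h f hf x
      have := congrArg Subtype.val (LinearMap.congr_fun h ⟨f, hf⟩)
      exact congrFun this x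
    · intro h
      refine LinearMap.ext fun f => Subtype.ext <| funext fun x => h f.1 f.2 x
  have hNK : N ≤ K := fun k hk => (hmem k).2 fun f hf x => hCN (hSC hf) k hk x
  have hgK : g ∉ K := by
    intro hg
    have hMK : M ≤ K := Subgroup.normalClosure_le_normal (Set.insert_subset hg hNK)
    have hbot : S.toSubmodule = ⊥ := by
      rw [eq_bot_iff, ← hCM]
      exact fun f hf => ⟨hSC hf, fun h hh x => (hmem h).1 (hMK hh) f hf x⟩
    obtain ⟨a, b, hab⟩ := hS.toNontrivial
    refine hab (SetLike.ext fun x => ?_)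
    have hx : x = 0 := Subtype.ext ((Submodule.mem_bot ℂ).1 (hbot ▸ x.2))
    rw [hx]
    exact ⟨fun _ => b.toSubmodule.zero_mem, fun _ => a.toSubmodule.zero_mem⟩
  have hpK : p ∣ K.index := by
    have h1 : orderOf (g : G ⧸ K) = p := by
      apply orderOf_eq_prime
      · rw [← QuotientGroup.mk_pow, QuotientGroup.eq_one_iff]; exact hNK hgp
      · rwa [Ne, QuotientGroup.eq_one_iff]
    rw [← h1]; exact orderOf_dvd_natCard _
  rcases Nat.eq_zero_or_pos (finrank ℂ S.toSubmodule) with h0 | h0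
  · rw [h0]; exact dvd_zero _
  rw [he, Nat.mul_div_cancel_left _ h0] at hcod'
  rw [he] at hpK
  exact (hp.dvd_mul.1 hpK).resolve_right hcod'
end

section
/- A finite group G satisfies |cod(G)| ≤ 2 if and only if G is an elementary abelian p-group for some prime p (including the trivial group, which has |cod(G)| = 1). -/
open CategoryTheory

/-- The set of irreducible character codegrees of `G`. -/
noncomputable def codSet (G : Type) [Group G] : Set ℕ :=
  {n | ∃ V : FDRep ℂ G, Simple V ∧ cod V = n}

lemma simple_iff_schur {G : Type} [Group G] [Finite G] (V : FDRep ℂ G) :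
    Simple V ↔ (Nontrivial V ∧ ∀ f : V →ₗ[ℂ] V, (∀ g, f ∘ₗ V.ρ g = V.ρ g ∘ₗ f) →
      ∃ c : ℂ, f = c • LinearMap.id) := by
  have : NeZero (Nat.card G : ℂ) := ⟨by exact_mod_cast Nat.card_pos.ne'⟩
  rw [FDRep.simple_iff_end_is_rank_one]
  have key : ∀ (x y : V ⟶ V), x.hom.hom.hom = y.hom.hom.hom → x = y := by
    intro x y h
    ext : 3
    exact LinearMap.congr_fun h _
  have hid : (𝟙 V : V ⟶ V).hom.hom.hom = LinearMap.id := rfl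
  by_cases hV : Nontrivial V
  · have hne : (𝟙 V : V ⟶ V) ≠ 0 := by
      intro h
      obtain ⟨v, hv⟩ := exists_ne (0 : V)
      apply hv
      have h2 : (𝟙 V : V ⟶ V).hom.hom.hom v = (0 : V ⟶ V).hom.hom.hom v := by rw [h]
      exact h2
    rw [finrank_eq_one_iff_of_nonzero' _ hne]
    constructor
    · intro h
      refine ⟨hV, fun f hf => ?_⟩
      obtain ⟨c, hc⟩ := h ⟨InducedCategory.homMk (ModuleCat.ofHom f), fun g => by
        ext1; ext1; exact LinearMap.congr_fun (hf g) _⟩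
      refine ⟨c, ?_⟩
      have := congrArg (fun x : V ⟶ V => x.hom.hom.hom) hc
      exact this.symm
    · rintro ⟨-, h⟩ w
      obtain ⟨c, hc⟩ := h w.hom.hom.hom (fun g => by
        have := w.comm g
        have := congrArg (fun x => x.hom.hom) this
        exact this)
      exact ⟨c, key _ _ hc.symm⟩
  · constructor
    · intro h
      exfalso
      rw [not_nontrivial_iff_subsingleton] at hV
      have : Subsingleton (V ⟶ V) := ⟨fun x y => key _ _ (by
        apply LinearMap.ext; intro v; exact @Subsingleton.elim V hV _ _)⟩
      rw [Module.finrank_zero_of_subsingleton] at h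
      omega
    · rintro ⟨h, -⟩; exact absurd h hV

lemma mem_repKer {G : Type} [Group G] (V : FDRep ℂ G) (g : G) :
    g ∈ repKer V ↔ V.ρ g = LinearMap.id := by
  unfold repKer
  rw [MonoidHom.mem_ker, Units.ext_iff, Representation.asGroupHom_apply]
  rfl

/-- The trace of left multiplication on a product of matrix algebras. -/
lemma trace_mulLeft_pi {n : ℕ} (d : Fin n → ℕ)
    (x : Π i, Matrix (Fin (d i)) (Fin (d i)) ℂ) :
    LinearMap.trace ℂ _ (LinearMap.mulLeft ℂ x) = ∑ i, (d i : ℂ) * (x i).trace := by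
  classical
  rw [LinearMap.trace_eq_matrix_trace ℂ (Pi.basis fun i => Matrix.stdBasis ℂ (Fin (d i)) (Fin (d i)))]
  rw [Matrix.trace, Fintype.sum_sigma]
  refine Finset.sum_congr rfl fun i _ => ?_
  rw [Fintype.sum_prod_type_right]
  simp only [Matrix.diag_apply, LinearMap.toMatrix_apply, Pi.basis_repr, LinearMap.mulLeft_apply]
  have : ∀ (b a : Fin (d i)), ((Matrix.stdBasis ℂ (Fin (d i)) (Fin (d i))).repr
      ((x * (Pi.basis fun i => Matrix.stdBasis ℂ (Fin (d i)) (Fin (d i))) ⟨i, (a, b)⟩) i)) (a, b)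
      = x i a a := by
    intro b a
    rw [Pi.basis_apply, Pi.mul_apply, Pi.single_eq_same, Matrix.stdBasis_eq_single]
    have h2 : ∀ M : Matrix (Fin (d i)) (Fin (d i)) ℂ,
      (Matrix.stdBasis ℂ (Fin (d i)) (Fin (d i))).repr M (a, b) = M a b := by
      intro M
      rfl
    rw [h2]
    simp
  simp only [this]
  simp [Matrix.trace]

/-- The trace of left multiplication by a group element on the group algebra. -/
lemma trace_mulLeft_group {G : Type} [Group G] [Finite G] (g : G) [Decidable (g = 1)] :
    LinearMap.trace ℂ _ (LinearMap.mulLeft ℂ (MonoidAlgebra.of ℂ G g)) =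
      if g = 1 then (Nat.card G : ℂ) else 0 := by
  classical
  have := Fintype.ofFinite G
  rw [LinearMap.trace_eq_matrix_trace ℂ (MonoidAlgebra.basis G ℂ)]
  rw [Matrix.trace]
  simp only [Matrix.diag_apply, LinearMap.toMatrix_apply, LinearMap.mulLeft_apply]
  have : ∀ x : G, ((MonoidAlgebra.basis G ℂ).repr
      (MonoidAlgebra.of ℂ G g * MonoidAlgebra.basis G ℂ x)) x = if g = 1 then 1 else 0 := by
    intro x
    rw [MonoidAlgebra.basis_apply, MonoidAlgebra.of_apply, MonoidAlgebra.single_mul_single]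
    change (MonoidAlgebra.single (g * x) ((1 : ℂ) * 1)).coeff x = _
    simp [Finsupp.single_apply]
  simp only [this]
  split_ifs <;> simp

lemma exists_family (G : Type) [Group G] [Finite G] :
    ∃ (n : ℕ) (V : Fin n → FDRep ℂ G), (∀ i, Simple (V i)) ∧
      ∀ g, ∑ i, (Module.finrank ℂ (V i) : ℂ) * LinearMap.trace ℂ (V i) ((V i).ρ g) =
        open Classical in if g = 1 then (Nat.card G : ℂ) else 0 := by
  classical
  have : NeZero (Nat.card G : ℂ) := ⟨by exact_mod_cast Nat.card_pos.ne'⟩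
  have : Module.Finite ℂ (MonoidAlgebra ℂ G) := Module.Finite.of_basis (MonoidAlgebra.basis G ℂ)
  obtain ⟨n, d, hd, ⟨e⟩⟩ :=
    IsSemisimpleRing.exists_algEquiv_pi_matrix_of_isAlgClosed ℂ (MonoidAlgebra ℂ G)
  let r : ∀ i, MonoidAlgebra ℂ G →ₐ[ℂ] Matrix (Fin (d i)) (Fin (d i)) ℂ := fun i =>
    (Pi.evalAlgHom ℂ _ i).comp e.toAlgHom
  have hr : ∀ i, Function.Surjective (r i) := fun i M => by
    refine ⟨e.symm (Pi.single i M), ?_⟩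
    simp [r]
  let ρ : ∀ i, Representation ℂ G (Fin (d i) → ℂ) := fun i =>
    (Matrix.toLinAlgEquiv' (R := ℂ) (n := Fin (d i))).toAlgHom.toMonoidHom.comp
      ((r i).toMonoidHom.comp (MonoidAlgebra.of ℂ G))
  have hρ : ∀ i g, ρ i g = Matrix.toLin' (r i (MonoidAlgebra.of ℂ G g)) := fun i g => rfl
  refine ⟨n, fun i => FDRep.of (ρ i), fun i => ?_, fun g => ?_⟩
  · rw [simple_iff_schur]
    have := hd i
    refine ⟨inferInstanceAs (Nontrivial (Fin (d i) → ℂ)), ?_⟩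
    change ∀ f : (Fin (d i) → ℂ) →ₗ[ℂ] (Fin (d i) → ℂ), (∀ g, f ∘ₗ ρ i g = ρ i g ∘ₗ f) →
      ∃ c : ℂ, f = c • LinearMap.id
    intro f hf
    have h1 : ∀ x : MonoidAlgebra ℂ G, f ∘ₗ Matrix.toLin' (r i x) = Matrix.toLin' (r i x) ∘ₗ f := by
      intro x
      induction x using MonoidAlgebra.induction_on with
      | of g => exact hf g
      | add x y hx hy => simp only [map_add, LinearMap.comp_add, LinearMap.add_comp, hx, hy]
      | smul c x hx => simp only [map_smul, LinearMap.comp_smul, LinearMap.smul_comp, hx]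
    have h2 : ∀ M : Matrix (Fin (d i)) (Fin (d i)) ℂ,
        M * LinearMap.toMatrix' f = LinearMap.toMatrix' f * M := by
      intro M
      obtain ⟨x, rfl⟩ := hr i M
      have := congrArg LinearMap.toMatrix' (h1 x)
      rw [LinearMap.toMatrix'_comp, LinearMap.toMatrix'_comp, LinearMap.toMatrix'_toLin'] at this
      exact this.symm
    obtain ⟨c, hc⟩ := Matrix.mem_range_scalar_of_commute_single (M := LinearMap.toMatrix' f)
      (fun a b _ => h2 _)
    refine ⟨c, ?_⟩
    apply LinearMap.toMatrix'.injective
    rw [← hc, map_smul, LinearMap.toMatrix'_id]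
    ext a b
    simp [Matrix.diagonal_apply, Matrix.one_apply]
  · rw [← trace_mulLeft_group g]
    have : LinearMap.mulLeft ℂ (e (MonoidAlgebra.of ℂ G g)) =
        e.toLinearEquiv.conj (LinearMap.mulLeft ℂ (MonoidAlgebra.of ℂ G g)) := by
      apply LinearMap.ext
      intro x
      simp [LinearEquiv.conj_apply]
    rw [← LinearMap.trace_conj' _ e.toLinearEquiv, ← this, trace_mulLeft_pi]
    refine Finset.sum_congr rfl fun i _ => ?_
    have h1 : Module.finrank ℂ (FDRep.of (ρ i)) = d i := by
      change Module.finrank ℂ (Fin (d i) → ℂ) = d i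
      simp
    rw [h1]
    congr 1
    change LinearMap.trace ℂ (Fin (d i) → ℂ) (ρ i g) = _
    rw [hρ, Matrix.trace_toLin'_eq]
    rfl

lemma trace_isIntegral {G : Type} [Group G] [Finite G] (V : FDRep ℂ G) (g : G) :
    IsIntegral ℤ (LinearMap.trace ℂ V (V.ρ g)) := by
  rw [Module.End.trace_eq_sum_roots_charpoly_of_splits (IsAlgClosed.splits _)]
  apply IsIntegral.multiset_sum
  intro x hx
  have h1 : Module.End.HasEigenvalue (V.ρ g) x := by
    rw [Module.End.hasEigenvalue_iff_isRoot_charpoly]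
    exact Polynomial.isRoot_of_mem_roots hx
  obtain ⟨v, hv⟩ := h1.exists_hasEigenvector
  have h2 : x ^ Nat.card G = 1 := by
    have h3 := hv.pow_apply (Nat.card G)
    rw [← map_pow, pow_card_eq_one', map_one] at h3
    have h4 : (x ^ Nat.card G - 1) • v = 0 := by
      rw [sub_smul, ← h3]; simp
    rcases smul_eq_zero.1 h4 with h | h
    · exact sub_eq_zero.1 h
    · exact absurd h hv.2
  exact IsIntegral.of_pow Nat.card_pos (by rw [h2]; exact isIntegral_one)

lemma sum_trace_normal {G : Type} [Group G] [Finite G] (V : FDRep ℂ G) (hV : Simple V)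
    (N : Subgroup G) [N.Normal] [Fintype N] (hN : ¬ N ≤ repKer V) :
    ∑ h : N, LinearMap.trace ℂ V (V.ρ h) = 0 := by
  rw [simple_iff_schur] at hV
  obtain ⟨-, hV⟩ := hV
  obtain ⟨c, hc⟩ := hV (∑ h : N, V.ρ h) (fun g => by
    change (∑ h : N, V.ρ h) * V.ρ g = V.ρ g * ∑ h : N, V.ρ h
    rw [Finset.sum_mul, Finset.mul_sum]
    refine Fintype.sum_equiv (MulAut.conjNormal g⁻¹).toEquiv _ _ fun h => ?_
    rw [← map_mul, ← map_mul]
    congr 1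
    simp [mul_assoc])
  rw [← map_sum, hc]
  obtain ⟨h, hh, hk⟩ := SetLike.not_le_iff_exists.1 hN
  have h1 : V.ρ h * (∑ h : N, V.ρ h) = ∑ h : N, V.ρ h := by
    rw [Finset.mul_sum]
    refine Fintype.sum_equiv (Equiv.mulLeft (⟨h, hh⟩ : N)) _ _ fun k => ?_
    simp
  have hc0 : c = 0 := by
    by_contra hc0
    apply hk
    rw [mem_repKer]
    rw [hc] at h1
    change V.ρ h * (c • 1) = c • 1 at h1
    rw [mul_smul_comm, mul_one] at h1
    exact smul_right_injective _ hc0 h1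
  simp [hc0]

open Classical in
lemma exists_family' (G : Type) [Group G] [Finite G] :
    ∃ (n : ℕ) (V : Fin n → FDRep ℂ G), (∀ i, Simple (V i)) ∧
      (∀ N : Subgroup G, N.Normal →
        (∑ i with N ≤ repKer (V i), Module.finrank ℂ (V i) ^ 2) * Nat.card N = Nat.card G) ∧
      (∀ N : Subgroup G, ∀ g ∈ N, g ≠ 1 →
        ((∑ i with N ≤ repKer (V i), Module.finrank ℂ (V i) ^ 2 : ℕ) : ℂ) +
         ∑ i with ¬ N ≤ repKer (V i),
           (Module.finrank ℂ (V i) : ℂ) * LinearMap.trace ℂ (V i) ((V i).ρ g) = 0) := by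
  obtain ⟨n, V, hs, hV⟩ := exists_family G
  have htr : ∀ i (N : Subgroup G), N ≤ repKer (V i) → ∀ g ∈ N,
      LinearMap.trace ℂ (V i) ((V i).ρ g) = Module.finrank ℂ (V i) := by
    intro i N h g hg
    rw [(mem_repKer _ _).1 (h hg), LinearMap.trace_id]
  refine ⟨n, V, hs, ?_, ?_⟩
  · intro N hN
    have := Fintype.ofFinite N
    have h1 : ∑ h : N, ∑ i, (Module.finrank ℂ (V i) : ℂ) *
        LinearMap.trace ℂ (V i) ((V i).ρ h) = Nat.card G := by
      simp only [hV]
      rw [Finset.sum_eq_single (1 : N)]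
      · simp
      · intro b _ hb
        simp [hb]
      · simp
    rw [Finset.sum_comm] at h1
    have h2 : ∀ i, ∑ h : N, (Module.finrank ℂ (V i) : ℂ) *
        LinearMap.trace ℂ (V i) ((V i).ρ h) =
        if N ≤ repKer (V i) then (Module.finrank ℂ (V i) : ℂ) ^ 2 * Nat.card N else 0 := by
      intro i
      split_ifs with h
      · rw [Finset.sum_congr rfl fun (x : N) _ => by rw [htr i N h x x.2]]
        simp
        ring
      · rw [← Finset.mul_sum, sum_trace_normal _ (hs i) N h, mul_zero]
    simp only [h2] at h1
    rw [← Finset.sum_filter, ← Finset.sum_mul] at h1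
    exact_mod_cast h1
  · intro N g hg hg1
    have h1 := hV g
    rw [if_neg hg1, ← Finset.sum_filter_add_sum_filter_not _ (fun i => N ≤ repKer (V i))] at h1
    rw [← h1]
    congr 1
    push_cast
    refine Finset.sum_congr rfl fun i hi => ?_
    rw [htr i N (Finset.mem_filter.1 hi).2 g hg, sq]

lemma dvd_of_integral (c d : ℕ) (a : ℂ) (ha : IsIntegral ℤ a) (hd : 0 < d)
    (h : (c : ℂ) + d * a = 0) : d ∣ c := by
  have h0 : (d : ℂ) ≠ 0 := by exact_mod_cast hd.ne'
  have h1 : a = ((-(c : ℚ) / d : ℚ) : ℂ) := by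
    push_cast
    field_simp
    linear_combination h
  have h2 : IsIntegral ℤ (-(c : ℚ) / d : ℚ) := by
    rw [h1] at ha
    exact (isIntegral_algebraMap_iff (algebraMap ℚ ℂ).injective).1 ha
  obtain ⟨z, hz⟩ := IsIntegrallyClosed.isIntegral_iff.1 h2
  have hd' : (d : ℚ) ≠ 0 := by exact_mod_cast hd.ne'
  have h3 : (z : ℚ) * d = -c := by
    simp at hz
    rw [hz]
    field_simp
  have h4 : z * d = -(c : ℤ) := by exact_mod_cast h3
  have : (d : ℤ) ∣ c := ⟨-z, by linarith⟩
  exact_mod_cast this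

lemma quot_rep {G : Type} [Group G] [Finite G] (N : Subgroup G) [N.Normal]
    (V : FDRep ℂ (G ⧸ N)) (hV : Simple V) :
    ∃ W : FDRep ℂ G, Simple W ∧ cod W = cod V := by
  refine ⟨FDRep.of (V.ρ.comp (QuotientGroup.mk' N)), ?_, ?_⟩
  · rw [simple_iff_schur] at hV ⊢
    refine ⟨hV.1, fun f hf => hV.2 f fun g => ?_⟩
    obtain ⟨g, rfl⟩ := QuotientGroup.mk'_surjective N g
    exact hf g
  · have : repKer (FDRep.of (V.ρ.comp (QuotientGroup.mk' N))) =
        (repKer V).comap (QuotientGroup.mk' N) := by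
      ext g
      rw [Subgroup.mem_comap, mem_repKer, mem_repKer]
      rfl
    unfold cod
    rw [this, Subgroup.index_comap_of_surjective _ (QuotientGroup.mk'_surjective N)]

lemma simple_comm {G : Type} [Group G] [Finite G] (V : FDRep ℂ G) (hV : Simple V)
    (hG : ∀ a b : G, a * b = b * a) : Module.finrank ℂ V = 1 := by
  rw [simple_iff_schur] at hV
  obtain ⟨hn, hV⟩ := hV
  have h1 : ∀ g, ∃ c : ℂ, V.ρ g = c • LinearMap.id := fun g => hV _ fun h => by
    change V.ρ g * V.ρ h = V.ρ h * V.ρ g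
    rw [← map_mul, ← map_mul, hG]
  obtain ⟨v, hv⟩ := exists_ne (0 : V)
  have hE : Module.finrank ℂ (V →ₗ[ℂ] V) = 1 := by
    refine (finrank_eq_one_iff_of_nonzero' (LinearMap.id : V →ₗ[ℂ] V) ?_).2 ?_
    · intro h
      exact hv (LinearMap.congr_fun h v)
    · intro f
      obtain ⟨c, hc⟩ := hV f (fun g => by
        obtain ⟨c, hc⟩ := h1 g
        rw [hc, LinearMap.comp_smul, LinearMap.smul_comp]
        rfl)
      exact ⟨c, hc.symm⟩
  rw [Module.finrank_linearMap] at hE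
  exact Nat.eq_one_of_mul_eq_one_left hE

lemma scalar_of_finrank_one {G : Type} [Group G] (V : FDRep ℂ G)
    (h : Module.finrank ℂ V = 1) : ∃ χ : G →* ℂ, ∀ g, V.ρ g = χ g • LinearMap.id := by
  have h1 : ∀ f : V →ₗ[ℂ] V, ∃ c : ℂ, f = c • LinearMap.id := by
    intro f
    obtain ⟨v, hv, hs⟩ := finrank_eq_one_iff'.1 h
    obtain ⟨c, hc⟩ := hs (f v)
    refine ⟨c, LinearMap.ext fun w => ?_⟩
    obtain ⟨b, rfl⟩ := hs w
    rw [map_smul, ← hc, smul_comm]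
    rfl
  have hne : (LinearMap.id : V →ₗ[ℂ] V) ≠ 0 := by
    have : Nontrivial V := Module.nontrivial_of_finrank_pos (R := ℂ) (by omega)
    obtain ⟨v, hv⟩ := exists_ne (0 : V)
    intro h
    exact hv (LinearMap.congr_fun h v)
  choose c hc using fun g => h1 (V.ρ g)
  refine ⟨⟨⟨c, ?_⟩, ?_⟩, hc⟩
  · apply smul_left_injective ℂ hne
    simp only
    rw [← hc, map_one, one_smul]; rfl
  · intro a b
    apply smul_left_injective ℂ hne
    simp only
    rw [← hc, map_mul, hc a, hc b]
    ext v
    simp [mul_smul, smul_comm (c b)]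

lemma comm_of_faithful_one {G : Type} [Group G] (V : FDRep ℂ G)
    (h : Module.finrank ℂ V = 1) (hf : repKer V = ⊥) (a b : G) : a * b = b * a := by
  obtain ⟨χ, hχ⟩ := scalar_of_finrank_one V h
  have : a * b * (b * a)⁻¹ ∈ repKer V := by
    rw [mem_repKer, hχ]
    have : χ (a * b * (b * a)⁻¹) = 1 := by
      rw [map_mul, map_mul, mul_comm (χ a), ← map_mul, ← map_mul, mul_inv_cancel, map_one]
    rw [this, one_smul]
  rw [hf, Subgroup.mem_bot] at this
  exact mul_inv_eq_one.1 this

/-- A simple representation of an elementary abelian group has codegree `1` or `p`. -/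
lemma cod_elementary {G : Type} [Group G] [Finite G] (p : ℕ) (hp : p.Prime)
    (h1 : ∀ g : G, g ^ p = 1) (hG : ∀ a b : G, a * b = b * a)
    (V : FDRep ℂ G) (hV : Simple V) : cod V = 1 ∨ cod V = p := by
  have hd := simple_comm V hV hG
  obtain ⟨χ, hχ⟩ := scalar_of_finrank_one V hd
  have hne : (LinearMap.id : V →ₗ[ℂ] V) ≠ 0 := by
    have : Nontrivial V := Module.nontrivial_of_finrank_pos (R := ℂ) (by omega)
    obtain ⟨v, hv⟩ := exists_ne (0 : V)
    intro h
    exact hv (LinearMap.congr_fun h v)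
  have hk : repKer V = χ.toHomUnits.ker := by
    ext g
    rw [mem_repKer, MonoidHom.mem_ker, Units.ext_iff, hχ, MonoidHom.coe_toHomUnits]
    constructor
    · intro h
      apply smul_left_injective ℂ hne
      simpa using h
    · intro h
      rw [h]
      simp
  unfold cod
  rw [hd, Nat.div_one, hk, Subgroup.index_ker]
  have : Finite χ.toHomUnits.range := Finite.of_surjective _ χ.toHomUnits.rangeRestrict_surjective
  have hcyc : IsCyclic χ.toHomUnits.range := inferInstance
  rw [← IsCyclic.exponent_eq_card, ← Nat.dvd_prime hp]
  apply Monoid.exponent_dvd_of_forall_pow_eq_one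
  rintro ⟨_, g, rfl⟩
  ext1
  simp [← map_pow, h1]

lemma cod_trivial (G : Type) [Group G] [Finite G] : 1 ∈ codSet G := by
  refine ⟨FDRep.of (Representation.trivial ℂ G ℂ), ?_, ?_⟩
  · rw [simple_iff_schur]
    refine ⟨inferInstanceAs (Nontrivial ℂ), ?_⟩
    intro f _
    change ℂ →ₗ[ℂ] ℂ at f
    change ∃ c : ℂ, f = c • LinearMap.id
    exact ⟨f 1, by ext; simp⟩
  · have : repKer (FDRep.of (Representation.trivial ℂ G ℂ)) = ⊤ := by
      ext g
      rw [mem_repKer]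
      simp only [Subgroup.mem_top, iff_true]
      rfl
    unfold cod
    rw [this, Subgroup.index_top]
    change 1 / Module.finrank ℂ ℂ = 1
    simp

lemma eq_of_div_eq {g a b m : ℕ} (ha : 0 < a) (hb : 0 < b) (h1 : g / a = m) (h2 : g / b = m)
    (h3 : a ^ 2 ≤ g) (h4 : b ^ 2 ≤ g) : a = b := by
  have key : ∀ a b : ℕ, 0 < a → 0 < b → g / a = m → g / b = m → a ^ 2 ≤ g → ¬ a < b := by
    intro a b ha hb h1 h2 h3 hlt
    have e1 : g < (m + 1) * a := by
      rw [← h1, mul_comm]; exact Nat.lt_mul_div_succ g ha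
    have e2 : m * b ≤ g := by rw [← h2]; exact Nat.div_mul_le_self g b
    have e3 : m < a := by nlinarith
    nlinarith
  rcases lt_trichotomy a b with h | h | h
  · exact absurd h (key a b ha hb h1 h2 h3)
  · exact h
  · exact absurd h (key b a hb ha h2 h1 h4)

open Classical in
theorem main_aux (m : ℕ) : ∀ k : ℕ, ∀ (G : Type) [Group G] [Finite G], Nat.card G = k →
    Nontrivial G → (∀ V : FDRep ℂ G, Simple V → cod V = 1 ∨ cod V = m) →
    m.Prime ∧ (∀ g : G, g ^ m = 1) ∧ (∀ a b : G, a * b = b * a) := by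
  intro k
  induction k using Nat.strong_induction_on with
  | _ k ih =>
  intro G _ _ hk hnt hcod
  -- the quotients
  have hq : ∀ N : Subgroup G, N.Normal → N ≠ ⊥ → N ≠ ⊤ →
      m.Prime ∧ (∀ g : G, g ^ m ∈ N) ∧ (∀ a b : G, a * b * (b * a)⁻¹ ∈ N) := by
    intro N hN hb ht
    have hlt : Nat.card (G ⧸ N) < k := by
      have h1 := Subgroup.card_eq_card_quotient_mul_card_subgroup N
      have h2 : 1 < Nat.card N := (Subgroup.one_lt_card_iff_ne_bot N).2 hb
      have h3 : 0 < Nat.card (G ⧸ N) := Nat.card_pos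
      rw [← hk, h1]
      nlinarith
    have hnt' : Nontrivial (G ⧸ N) := QuotientGroup.nontrivial_iff.2 ht
    obtain ⟨hm, hp, hc⟩ := ih _ hlt (G ⧸ N) rfl hnt' (fun V hV => by
      obtain ⟨W, hW, hWV⟩ := quot_rep N V hV
      rw [← hWV]
      exact hcod W hW)
    refine ⟨hm, fun g => ?_, fun a b => ?_⟩
    · rw [← QuotientGroup.eq_one_iff]
      exact hp g
    · rw [← QuotientGroup.eq_one_iff]
      change (a : G ⧸ N) * (b : G ⧸ N) * ((b : G ⧸ N) * (a : G ⧸ N))⁻¹ = 1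
      rw [hc (a : G ⧸ N) (b : G ⧸ N), mul_inv_cancel]
  -- a minimal normal subgroup
  obtain ⟨N, hNmin⟩ := (Set.toFinite {N : Subgroup G | N.Normal ∧ N ≠ ⊥}).exists_minimal
    ⟨⊤, inferInstance, top_ne_bot⟩
  obtain ⟨hN, hNb⟩ := hNmin.prop
  have hmin : ∀ K : Subgroup G, K.Normal → ¬ N ≤ K → N ⊓ K = ⊥ := by
    intro K hK hNK
    by_contra hb
    have : (N ⊓ K) ∈ {N : Subgroup G | N.Normal ∧ N ≠ ⊥} := ⟨inferInstance, hb⟩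
    exact hNK ((hNmin.le_of_le this inf_le_left).trans inf_le_right)
  by_cases hbad : ∃ K : Subgroup G, K.Normal ∧ ¬ N ≤ K ∧ K ≠ ⊥
  · obtain ⟨K, hK, hNK, hKb⟩ := hbad
    have hinf := hmin K hK hNK
    have hNt : N ≠ ⊤ := by
      rintro rfl
      rw [top_inf_eq] at hinf
      exact hKb hinf
    have hKt : K ≠ ⊤ := by
      rintro rfl
      exact hNK le_top
    obtain ⟨hm, hp1, hc1⟩ := hq N hN hNb hNt
    obtain ⟨-, hp2, hc2⟩ := hq K hK hKb hKt
    have hmem : ∀ x, x ∈ N → x ∈ K → x = 1 := by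
      intro x h1 h2
      have : x ∈ N ⊓ K := ⟨h1, h2⟩
      rwa [hinf, Subgroup.mem_bot] at this
    exact ⟨hm, fun g => hmem _ (hp1 g) (hp2 g),
      fun a b => mul_inv_eq_one.1 (hmem _ (hc1 a b) (hc2 a b))⟩
  push Not at hbad
  obtain ⟨n, V, hs, hA, hB⟩ := exists_family' G
  have hker : ∀ i, (repKer (V i)).Normal := fun i => by unfold repKer; infer_instance
  have hcard : 1 < Nat.card G := Finite.one_lt_card
  have hNcard : 1 < Nat.card N := (Subgroup.one_lt_card_iff_ne_bot N).2 hNb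
  set d : Fin n → ℕ := fun i => Module.finrank ℂ (V i) with hd
  have hdpos : ∀ i, 0 < d i := fun i => by
    have := ((simple_iff_schur (V i)).1 (hs i)).1
    exact Module.finrank_pos
  set c := ∑ i with N ≤ repKer (V i), d i ^ 2 with hc
  have hcN : c * Nat.card N = Nat.card G := hA N hN
  have hall : ∑ i, d i ^ 2 = Nat.card G := by
    have := hA ⊥ inferInstance
    simpa using this
  have hcpos : 0 < c := by
    rcases Nat.eq_zero_or_pos c with h | h
    · rw [h] at hcN; omega
    · exact h
  have hsplit : c + ∑ i with ¬ N ≤ repKer (V i), d i ^ 2 = Nat.card G := by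
    rw [← hall, hc]
    exact Finset.sum_filter_add_sum_filter_not _ _ _
  have hlt : ∀ i, ¬ N ≤ repKer (V i) → d i ^ 2 < Nat.card G := by
    intro i hi
    have : d i ^ 2 ≤ ∑ i with ¬ N ≤ repKer (V i), d i ^ 2 :=
      Finset.single_le_sum (f := fun i => d i ^ 2) (fun _ _ => Nat.zero_le _) (by simp [hi])
    omega
  have hdiv : ∀ i, ¬ N ≤ repKer (V i) → Nat.card G / d i = m := by
    intro i hi
    have h1 : cod (V i) = Nat.card G / d i := by
      unfold cod
      rw [hbad _ (hker i) hi, Subgroup.index_bot]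
    rw [← h1]
    refine (hcod (V i) (hs i)).resolve_left ?_
    rw [h1]
    intro h2
    have h3 : Nat.card G < d i * (1 + 1) := by
      have := Nat.lt_mul_div_succ (Nat.card G) (hdpos i)
      rwa [h2] at this
    have h4 := hlt i hi
    have h5 := hdpos i
    have h6 : d i < 2 := by nlinarith
    have h7 : d i = 1 := by omega
    rw [h7] at h3
    omega
  have hex : ∃ i, ¬ N ≤ repKer (V i) := by
    by_contra hne
    push Not at hne
    rw [Finset.sum_eq_zero] at hsplit
    · rw [← hcN] at hsplit
      nlinarith
    · intro i hi
      exact absurd (hne i) (Finset.mem_filter.1 hi).2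
  obtain ⟨i0, hi0⟩ := hex
  have hdeq : ∀ i, ¬ N ≤ repKer (V i) → d i = d i0 := fun i hi =>
    eq_of_div_eq (hdpos i) (hdpos i0) (hdiv i hi) (hdiv i0 hi0) (hlt i hi).le (hlt i0 hi0).le
  have hdvd : d i0 ∣ c := by
    obtain ⟨g, hg, hg1⟩ := (Subgroup.ne_bot_iff_exists_ne_one.1 hNb).imp
      (fun g hg => hg) |> fun ⟨g, hg⟩ => (⟨g.1, g.2, fun h => hg (Subtype.ext h)⟩ :
        ∃ g : G, g ∈ N ∧ g ≠ 1)
    have h1 := hB N g hg hg1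
    refine dvd_of_integral c (d i0)
      (∑ i with ¬ N ≤ repKer (V i), LinearMap.trace ℂ (V i) ((V i).ρ g))
      (IsIntegral.sum _ fun i _ => trace_isIntegral (V i) g) (hdpos i0) ?_
    rw [← h1]
    congr 1
    rw [Finset.mul_sum]
    refine Finset.sum_congr rfl fun i hi => ?_
    rw [← hdeq i (Finset.mem_filter.1 hi).2]
  have hfin : d i0 = 1 → m = Nat.card G ∧ ∀ a b : G, a * b = b * a := by
    intro h1
    refine ⟨?_, comm_of_faithful_one (V i0) h1 (hbad _ (hker i0) hi0)⟩
    rw [← hdiv i0 hi0, h1, Nat.div_one]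
  by_cases hNt : N = ⊤
  · have hc1 : c = 1 := by
      rw [hNt, Subgroup.card_top] at hcN
      exact Nat.eq_of_mul_eq_mul_right (by omega : 0 < Nat.card G) (by rw [hcN, one_mul])
    rw [hc1] at hdvd
    obtain ⟨hm, hcomm⟩ := hfin (Nat.dvd_one.1 hdvd)
    refine ⟨?_, fun g => by rw [hm]; exact pow_card_eq_one', hcomm⟩
    let _ : CommGroup G := { (inferInstance : Group G) with mul_comm := hcomm }
    have : IsSimpleGroup G := ⟨fun K hK => by
      by_cases h : N ≤ K
      · right; rwa [hNt, top_le_iff] at h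
      · left; exact hbad K hK h⟩
    rw [hm]
    exact IsSimpleGroup.prime_card
  · obtain ⟨hm, hp, hcm⟩ := hq N hN hNb hNt
    have hcq : c = Nat.card (G ⧸ N) := by
      have h1 := Subgroup.card_eq_card_quotient_mul_card_subgroup N
      rw [← hcN] at h1
      exact Nat.eq_of_mul_eq_mul_right (by omega) h1
    have hfact : Fact m.Prime := ⟨hm⟩
    obtain ⟨e, he⟩ : ∃ e, c = m ^ e := by
      rw [hcq, ← IsPGroup.iff_card]
      intro g
      obtain ⟨g, rfl⟩ := QuotientGroup.mk_surjective g
      refine ⟨1, ?_⟩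
      rw [pow_one, ← QuotientGroup.mk_pow, QuotientGroup.eq_one_iff]
      exact hp g
    have hd1 : d i0 = 1 := by
      by_contra hd1
      rw [he] at hdvd
      obtain ⟨a, hae, hda⟩ := (Nat.dvd_prime_pow hm).1 hdvd
      have ha0 : a ≠ 0 := by
        rintro rfl
        exact hd1 (by simpa using hda)
      have hmd : m ∣ d i0 := by rw [hda]; exact dvd_pow_self m ha0
      have hmc : m ∣ c := by rw [he]; exact dvd_pow_self m (by omega)
      have e1 : Nat.card G < d i0 * (m + 1) := by
        rw [← hdiv i0 hi0]; exact Nat.lt_mul_div_succ _ (hdpos i0)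
      have e2 := hlt i0 hi0
      have e3 : d i0 < m + 1 := by nlinarith
      have e4 : d i0 = m := le_antisymm (by omega) (Nat.le_of_dvd (hdpos i0) hmd)
      have e5 : m ∣ Nat.card G := by
        rw [← hsplit]
        refine dvd_add hmc (Finset.dvd_sum fun i hi => ?_)
        rw [hdeq i (Finset.mem_filter.1 hi).2, e4]
        exact dvd_pow_self m two_ne_zero
      rw [e4] at e1 e2
      obtain ⟨t, ht⟩ := e5
      rw [ht] at e1 e2
      have e6 : t < m + 1 := lt_of_mul_lt_mul_left e1 (Nat.zero_le m)
      have e7 : m < t := by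
        rw [sq] at e2
        exact lt_of_mul_lt_mul_left e2 (Nat.zero_le m)
      omega
    obtain ⟨hmG, hcomm⟩ := hfin hd1
    exact ⟨hm, fun g => by rw [hmG]; exact pow_card_eq_one', hcomm⟩

lemma codSet_finite (G : Type) [Group G] [Finite G] : (codSet G).Finite := by
  refine (Set.finite_Iic (Nat.card G)).subset ?_
  rintro _ ⟨V, -, rfl⟩
  exact (Nat.div_le_self _ _).trans (Nat.le_of_dvd Nat.card_pos (Subgroup.index_dvd_card _))

/-- A finite group `G` satisfies `|cod G| ≤ 2` iff `G` is an
elementary abelian `p`-group for some prime `p`. -/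
theorem stmt5 {G : Type} [Group G] [Finite G] :
    (codSet G).ncard ≤ 2 ↔
      ∃ p : ℕ, p.Prime ∧ (∀ g : G, g ^ p = 1) ∧ (∀ a b : G, a * b = b * a) := by
  constructor
  · intro h
    rcases subsingleton_or_nontrivial G with hG | hG
    · exact ⟨2, Nat.prime_two, fun g => Subsingleton.elim _ _, fun a b => Subsingleton.elim _ _⟩
    obtain ⟨m, hm⟩ : ∃ m, ∀ V : FDRep ℂ G, Simple V → cod V = 1 ∨ cod V = m := by
      by_cases hex : ∃ x ∈ codSet G, x ≠ 1
      · obtain ⟨x, hx, hx1⟩ := hex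
        refine ⟨x, fun V hV => ?_⟩
        by_contra hcon
        push Not at hcon
        have hsub : ({1, x, cod V} : Set ℕ) ⊆ codSet G := by
          rintro y (rfl | rfl | rfl)
          · exact cod_trivial G
          · exact hx
          · exact ⟨V, hV, rfl⟩
        have h3 : ({1, x, cod V} : Set ℕ).ncard = 3 :=
          Set.ncard_eq_three.2 ⟨1, x, cod V, hx1.symm, hcon.1.symm, hcon.2.symm, rfl⟩
        have := Set.ncard_le_ncard hsub (codSet_finite G)
        omega
      · push Not at hex
        exact ⟨1, fun V hV => Or.inl (hex _ ⟨V, hV, rfl⟩)⟩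
    exact ⟨m, main_aux m _ G rfl hG hm⟩
  · rintro ⟨p, hp, h1, hG⟩
    have hsub : codSet G ⊆ {1, p} := by
      rintro _ ⟨V, hV, rfl⟩
      exact cod_elementary p hp h1 hG V hV
    exact (Set.ncard_le_ncard hsub (Set.toFinite _)).trans ((Set.ncard_insert_le 1 {p}).trans (by simp))
end

section
/- Let G be a finite group with a normal subgroup V = V₁ × ⋯ × V_t, where each V_i is an abelian minimal normal subgroup of G and the V_i are pairwise non-isomorphic as G-modules. If λ = λ₁ × ⋯ × λ_t with each λ_i a nontrivial irreducible character of V_i, then for every χ ∈ Irr(G) lying over λ one has ker(χ) ∩ V = 1 and |V| divides cod(χ). -/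
open CategoryTheory

theorem aux_schur {G : Type} [Group G] (χ : FDRep ℂ G) [Simple χ]
    (T : χ →ₗ[ℂ] χ) (hT : ∀ g, T * χ.ρ g = χ.ρ g * T) : ∃ c : ℂ, T = c • 1 := by
  let f : χ ⟶ χ := ⟨InducedCategory.homMk (ModuleCat.ofHom T), fun g => by
    ext1
    exact hT g⟩
  obtain ⟨c, hc⟩ := endomorphism_simple_eq_smul_id ℂ f
  refine ⟨c, ?_⟩
  have h2 : (c • 𝟙 χ : χ ⟶ χ).hom.hom.hom = T := by rw [hc]; rfl
  rw [← h2]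
  rfl

theorem aux_schur_sum {G : Type} [Group G] [Fintype G] {E : Type} [AddCommGroup E] [Module ℂ E]
    [FiniteDimensional ℂ E] (ρ : G →* Module.End ℂ E)
    (hS : ∀ T : Module.End ℂ E, (∀ g, T * ρ g = ρ g * T) → ∃ c : ℂ, T = c • 1)
    (f : E →ₗ[ℂ] ℂ) (y w : E) :
    (Module.finrank ℂ E : ℂ) • ∑ g, f (ρ g⁻¹ w) • ρ g y = ((Fintype.card G : ℂ) * f y) • w := by
  obtain ⟨c, hc⟩ := hS (∑ g, ρ g * (f.smulRight y) * ρ g⁻¹) (by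
    intro h
    rw [Finset.sum_mul, Finset.mul_sum]
    refine Fintype.sum_equiv (Equiv.mulLeft h⁻¹) _ _ ?_
    intro g
    simp only [Equiv.coe_mulLeft, mul_inv_rev, inv_inv, map_mul, mul_assoc]
    rw [← mul_assoc (ρ h) (ρ h⁻¹), ← map_mul ρ h h⁻¹]
    simp)
  have htr := congrArg (LinearMap.trace ℂ E) hc
  have h1 : ∀ g, LinearMap.trace ℂ E (ρ g * (f.smulRight y) * ρ g⁻¹) = f y := by
    intro g
    rw [LinearMap.trace_mul_comm, ← mul_assoc, ← map_mul]
    simp [LinearMap.trace_smulRight]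
  rw [map_sum] at htr
  simp only [h1, map_smul, LinearMap.trace_one, Finset.sum_const, Finset.card_univ, nsmul_eq_mul,
    smul_eq_mul] at htr
  have hw := congrArg (fun T : Module.End ℂ E => T w) hc
  simp only [LinearMap.sum_apply, Module.End.mul_apply, LinearMap.smulRight_apply, map_smul,
    LinearMap.smul_apply, Module.End.one_apply] at hw
  rw [hw, htr, smul_smul, mul_comm]

theorem aux_trace_integral {E : Type} [AddCommGroup E] [Module ℂ E]
    [FiniteDimensional ℂ E] (X : Module.End ℂ E) (n : ℕ) (hn : 0 < n) (hX : X ^ (n + 1) = X) :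
    IsIntegral ℤ (LinearMap.trace ℂ E X) := by
  rw [Module.End.trace_eq_sum_roots_charpoly_of_splits (IsAlgClosed.splits _)]
  refine IsIntegral.multiset_sum ?_
  intro μ hμ
  have h0 : X.HasEigenvalue μ := by
    rw [Module.End.hasEigenvalue_iff_isRoot_charpoly]
    exact (Polynomial.mem_roots'.1 hμ).2
  obtain ⟨v, hv⟩ := h0.exists_hasEigenvector
  have h1 := hv.pow_apply (n + 1)
  rw [hX, hv.apply_eq_smul] at h1
  have h2 : μ = μ ^ (n + 1) := smul_left_injective ℂ hv.2 h1
  refine ⟨Polynomial.X ^ (n + 1) - Polynomial.X, ?_, ?_⟩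
  · apply Polynomial.monic_X_pow_sub
    rw [Polynomial.degree_X]
    exact_mod_cast Nat.succ_lt_succ hn
  · simp [← h2]

theorem aux_sum_quot {G : Type} [Group G] [Fintype G] (A : Subgroup G) {E : Type} [AddCommGroup E]
    (F : G → E) (hF : ∀ g, ∀ a ∈ A, F (g * a) = F g) [Fintype (G ⧸ A)] :
    ∑ g, F g = (Nat.card A) • ∑ q : G ⧸ A, F q.out := by
  classical
  have : Fintype A := Fintype.ofFinite A
  have h1 : ∀ g, F g = F (QuotientGroup.mk (s := A) g).out := by
    intro g
    obtain ⟨a, ha⟩ := QuotientGroup.mk_out_eq_mul A g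
    rw [ha, hF _ _ a.2]
  rw [Fintype.sum_equiv (Subgroup.groupEquivQuotientProdSubgroup (s := A)) F
    (fun p => F p.1.out) (fun g => h1 g), Fintype.sum_prod_type]
  simp [Finset.smul_sum]

theorem aux_ito {G : Type} [Group G] [Finite G] {E : Type} [AddCommGroup E] [Module ℂ E]
    [FiniteDimensional ℂ E] (ρ : G →* Module.End ℂ E)
    (hS : ∀ T : Module.End ℂ E, (∀ g, T * ρ g = ρ g * T) → ∃ c : ℂ, T = c • 1)
    (A : Subgroup G) [A.Normal] (x : E) (hx : x ≠ 0)
    (hA : ∀ a ∈ A, ∃ c : ℂ, ρ a x = c • x) :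
    Module.finrank ℂ E ∣ A.index := by
  classical
  have : Fintype G := Fintype.ofFinite G
  have : Fintype A := Fintype.ofFinite A
  have : Fintype (G ⧸ A) := Fintype.ofFinite _
  choose! l hl using hA
  have linj : ∀ c d : ℂ, c • x = d • x → c = d := fun c d h => smul_left_injective ℂ hx h
  have l1 : l 1 = 1 := linj _ _ (by rw [← hl 1 A.one_mem]; simp)
  have lmul : ∀ a ∈ A, ∀ b ∈ A, l (a * b) = l a * l b := by
    intro a ha b hb
    apply linj
    rw [← hl _ (A.mul_mem ha hb), map_mul, Module.End.mul_apply, hl b hb, map_smul, hl a ha,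
      smul_smul, mul_comm]
  have linv : ∀ a ∈ A, l a * l a⁻¹ = 1 := by
    intro a ha
    rw [← lmul a ha _ (A.inv_mem ha), mul_inv_cancel, l1]
  have hcA : (Nat.card A : ℂ) ≠ 0 := by exact_mod_cast Nat.card_pos.ne'
  -- the projector
  obtain ⟨P, hPdef⟩ : ∃ P : Module.End ℂ E,
      P = (Nat.card A : ℂ)⁻¹ • ∑ a : A, l (a : G)⁻¹ • ρ a := ⟨_, rfl⟩
  have hP1 : ∀ a ∈ A, ρ a * P = l a • P := by
    intro a ha
    rw [hPdef, mul_smul_comm, smul_comm (l a) (Nat.card A : ℂ)⁻¹, Finset.mul_sum,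
      Finset.smul_sum (r := l a)]
    congr 1
    refine Fintype.sum_equiv (Equiv.mulLeft (⟨a, ha⟩ : A)) _ _ ?_
    intro b
    simp only [Equiv.coe_mulLeft, Subgroup.coe_mul, mul_inv_rev, map_mul, mul_smul_comm, smul_smul]
    rw [lmul _ (A.inv_mem b.2) _ (A.inv_mem ha), mul_left_comm, linv a ha, mul_one]
  have hP2 : ∀ a ∈ A, P * ρ a = l a • P := by
    intro a ha
    rw [hPdef, smul_mul_assoc, smul_comm (l a) (Nat.card A : ℂ)⁻¹, Finset.sum_mul,
      Finset.smul_sum (r := l a)]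
    congr 1
    refine Fintype.sum_equiv (Equiv.mulRight (⟨a, ha⟩ : A)) _ _ ?_
    intro b
    simp only [Equiv.coe_mulRight, Subgroup.coe_mul, mul_inv_rev, map_mul, smul_mul_assoc,
      smul_smul]
    rw [lmul _ (A.inv_mem ha) _ (A.inv_mem b.2), ← mul_assoc, linv a ha, one_mul]
  have hPx : P x = x := by
    rw [hPdef]
    simp only [LinearMap.smul_apply, LinearMap.sum_apply]
    rw [Finset.sum_congr rfl (g := fun _ => x), Finset.sum_const, Finset.card_univ,
      ← Nat.card_eq_fintype_card, ← Nat.cast_smul_eq_nsmul ℂ, smul_smul, inv_mul_cancel₀ hcA,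
      one_smul]
    intro a _
    rw [hl a a.2, smul_smul, mul_comm, linv a a.2, one_smul]
  have hPP : P * P = P := by
    nth_rewrite 1 [hPdef]
    rw [smul_mul_assoc, Finset.sum_mul]
    rw [Finset.sum_congr rfl (g := fun _ => P), Finset.sum_const, Finset.card_univ,
      ← Nat.card_eq_fintype_card, ← Nat.cast_smul_eq_nsmul ℂ, smul_smul, inv_mul_cancel₀ hcA,
      one_smul]
    intro a _
    rw [smul_mul_assoc, hP1 a a.2, smul_smul, mul_comm, linv a a.2, one_smul]
  have htrInt : ∀ g, IsIntegral ℤ (LinearMap.trace ℂ E (ρ g * P)) := by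
    intro g
    have e1 : LinearMap.trace ℂ E (ρ g * P) = LinearMap.trace ℂ E (P * ρ g * P) := by
      rw [LinearMap.trace_mul_comm ℂ (P * ρ g), ← mul_assoc, hPP, LinearMap.trace_mul_comm]
    rw [e1]
    have hconj : ∀ a ∈ A, g⁻¹ * a * g ∈ A := by
      intro a ha
      simpa using (inferInstance : A.Normal).conj_mem a ha g⁻¹
    have key : ∀ a ∈ A, l a • (P * ρ g * P) = l (g⁻¹ * a * g) • (P * ρ g * P) := by
      intro a ha
      rw [← smul_mul_assoc, ← smul_mul_assoc, ← hP2 a ha, mul_assoc, mul_assoc P (ρ g),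
        ← mul_smul_comm, ← mul_smul_comm, ← hP1 _ (hconj a ha)]
      simp only [mul_assoc]
      rw [← mul_assoc (ρ a), ← mul_assoc (ρ g), ← map_mul, ← map_mul]
      simp [mul_assoc]
    by_cases hT : ∀ a ∈ A, l (g⁻¹ * a * g) = l a
    · have hcomm : P * ρ g = ρ g * P := by
        rw [hPdef, smul_mul_assoc, mul_smul_comm, Finset.sum_mul, Finset.mul_sum]
        congr 1
        refine Fintype.sum_equiv (MulAut.conjNormal (H := A) g⁻¹).toEquiv _ _ ?_
        intro a
        have h2 := hT _ (A.inv_mem a.2)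
        have h3 : (((MulAut.conjNormal (H := A) g⁻¹).toEquiv a : A) : G) = g⁻¹ * a * g := by
          simp
        rw [h3, smul_mul_assoc, mul_smul_comm, ← map_mul, ← map_mul, ← h2]
        congr 2 <;> group
      have hc : Commute P (ρ g) := hcomm
      rw [hcomm, mul_assoc, hPP, ← hcomm]
      have hPn : ∀ n : ℕ, P ^ (n + 1) = P := by
        intro n
        induction n with
        | zero => simp
        | succ k ih => rw [pow_succ, ih, hPP]
      refine aux_trace_integral _ (Fintype.card G) Fintype.card_pos ?_
      rw [hc.mul_pow, hPn, ← map_pow, pow_succ, pow_card_eq_one, one_mul]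
    · push Not at hT
      obtain ⟨a, ha, hne⟩ := hT
      have : P * ρ g * P = 0 := by
        have h4 := sub_eq_zero.2 (key a ha)
        rw [← sub_smul] at h4
        exact (smul_eq_zero.1 h4).resolve_left (sub_ne_zero.2 hne.symm)
      rw [this, map_zero]
      exact isIntegral_zero
  -- Schur identity
  have hd : (Module.finrank ℂ E : ℂ) ≠ 0 := by
    have : Nontrivial E := ⟨x, 0, hx⟩
    exact_mod_cast (Module.finrank_pos (R := ℂ) (M := E)).ne'
  have hsum : (Module.finrank ℂ E : ℂ) • ∑ g, LinearMap.trace ℂ E (ρ g⁻¹ * P) • ρ g x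
      = (Fintype.card G : ℂ) • x := by
    let b := Module.finBasis ℂ E
    have h1 : ∀ g, LinearMap.trace ℂ E (ρ g⁻¹ * P) = ∑ i, b.coord i (ρ g⁻¹ (P (b i))) := by
      intro g
      rw [LinearMap.trace_eq_matrix_trace ℂ b, Matrix.trace]
      simp [LinearMap.toMatrix_apply]
    simp only [h1, Finset.sum_smul]
    rw [Finset.sum_comm, Finset.smul_sum]
    simp only [aux_schur_sum ρ hS]
    simp only [mul_smul, ← Finset.smul_sum]
    congr 1
    conv_rhs => rw [← hPx, ← b.sum_repr x, map_sum]
    simp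
  rw [aux_sum_quot A (fun g => LinearMap.trace ℂ E (ρ g⁻¹ * P) • ρ g x)] at hsum
  swap
  · intro g a ha
    rw [mul_inv_rev, map_mul ρ, map_mul ρ, Module.End.mul_apply, hl a ha, map_smul, smul_smul,
      mul_assoc, LinearMap.trace_mul_comm, mul_assoc, hP2 _ (A.inv_mem ha), mul_smul_comm, map_smul,
      smul_eq_mul, mul_right_comm, mul_comm (l a⁻¹), linv a ha, one_mul]
  obtain ⟨q, hq⟩ : ∃ q : ℂ, q = (A.index : ℂ) / (Module.finrank ℂ E : ℂ) := ⟨_, rfl⟩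
  have hqx : q • x = ∑ r : G ⧸ A, LinearMap.trace ℂ E (ρ r.out⁻¹ * P) • ρ r.out x := by
    have hcard : (Fintype.card G : ℂ) = (Nat.card A : ℂ) * A.index := by
      rw [← Nat.card_eq_fintype_card, ← A.card_mul_index]; push_cast; rfl
    rw [hcard, ← Nat.cast_smul_eq_nsmul ℂ, smul_smul, mul_comm, mul_smul, mul_smul] at hsum
    have h5 := smul_right_injective E hcA hsum
    rw [hq, div_eq_inv_mul, mul_smul, ← h5, smul_smul, inv_mul_cancel₀ hd, one_smul]
  let O := integralClosure ℤ ℂ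
  let N : Submodule O E := Submodule.span O (Set.range fun g => ρ g x)
  have hmem : ∀ g, ρ g x ∈ N := fun g => Submodule.subset_span ⟨g, rfl⟩
  have hqN : ∀ n ∈ N, q • n ∈ N := by
    intro n hn
    induction hn using Submodule.span_induction with
    | mem y hy =>
      obtain ⟨h, rfl⟩ := hy
      dsimp only
      rw [← map_smul, hqx, map_sum]
      refine Submodule.sum_mem _ fun r _ => ?_
      rw [map_smul, ← Module.End.mul_apply, ← map_mul]
      exact N.smul_mem (⟨_, htrInt _⟩ : O) (hmem _)
    | zero => simp
    | add y z _ _ hy hz => rw [smul_add]; exact N.add_mem hy hz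
    | smul c y _ hy => rw [smul_comm]; exact N.smul_mem _ hy
  have hqint : IsIntegral O q := by
    refine isIntegral_of_smul_mem_submodule N ?_ (Submodule.fg_span (Set.finite_range _)) q hqN
    intro h
    apply hx
    have := hmem 1
    rw [h] at this
    simpa using this
  have hqZ : IsIntegral ℤ q := isIntegral_trans q hqint
  have hqQ : q = algebraMap ℚ ℂ ((A.index : ℚ) / (Module.finrank ℂ E : ℚ)) := by
    rw [hq]; simp
  rw [hqQ, isIntegral_algebraMap_iff (algebraMap ℚ ℂ).injective] at hqZ
  obtain ⟨z, hz⟩ := IsIntegrallyClosed.isIntegral_iff.1 hqZ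
  have hd' : (Module.finrank ℂ E : ℚ) ≠ 0 := by exact_mod_cast hd
  rw [eq_div_iff hd'] at hz
  have : (A.index : ℤ) = Module.finrank ℂ E * z := by
    have : ((A.index : ℤ) : ℚ) = ((Module.finrank ℂ E * z : ℤ) : ℚ) := by
      push_cast
      rw [← hz]
      simp [mul_comm]
    exact_mod_cast this
  exact_mod_cast Dvd.intro _ this.symm

theorem aux_min {G : Type} [Group G] [Finite G] {t : ℕ} (V : Fin t → Subgroup G)
    (hnorm : ∀ i, (V i).Normal)
    (hmin : ∀ i, V i ≠ ⊥ ∧ ∀ C : Subgroup G, C.Normal → C ≤ V i → C = ⊥ ∨ C = V i)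
    (hindep : iSupIndep V)
    (hnoniso : ∀ i j, i ≠ j →
      ¬ ∃ e : ↥(V i) ≃* ↥(V j), ∀ (g : G) (x : ↥(V i)),
        (↑(e ⟨g * ↑x * g⁻¹, (hnorm i).conj_mem ↑x x.2 g⟩) : G) = g * (↑(e x) : G) * g⁻¹)
    (K : Subgroup G) (hK : K.Normal) (hKV : K ≤ ⨆ i, V i) (hK1 : K ≠ ⊥) : ∃ i, V i ≤ K := by
  classical
  obtain ⟨N, hNK, hN⟩ : ∃ N ≤ K, Minimal (fun N : Subgroup G => N.Normal ∧ N ≠ ⊥) N :=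
    exists_minimal_le_of_wellFoundedLT _ K ⟨hK, hK1⟩
  obtain ⟨⟨hNn, hN1⟩, hNmin⟩ := hN
  have hcomm : Pairwise fun i j => ∀ x y : G, x ∈ V i → y ∈ V j → Commute x y :=
    fun i j hij x y hx hy => Subgroup.commute_of_normal_of_disjoint _ _ (hnorm i) (hnorm j)
      (hindep.pairwiseDisjoint hij) x y hx hy
  obtain ⟨φ, hφ⟩ : ∃ φ, φ = Subgroup.noncommPiCoprod hcomm := ⟨_, rfl⟩
  have hφs : ∀ i (y : V i), φ (Pi.mulSingle i y) = y := by
    intro i y; rw [hφ, Subgroup.noncommPiCoprod_mulSingle]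
  have hφi : Function.Injective φ := by
    rw [hφ]; exact Subgroup.injective_noncommPiCoprod_of_iSupIndep hindep
  have hφr : φ.range = ⨆ i, V i := by
    rw [hφ]; exact Subgroup.noncommPiCoprod_range
  let cj : G → (∀ i, V i) →* (∀ i, V i) := fun g =>
    { toFun := fun v i => ⟨g * v i * g⁻¹, (hnorm i).conj_mem _ (v i).2 g⟩
      map_one' := by ext i; simp
      map_mul' := fun v w => by ext i; simp }
  have hcj : ∀ g v, φ (cj g v) = g * φ v * g⁻¹ := by
    intro g v
    have : φ.comp (cj g) = (MulAut.conj g).toMonoidHom.comp φ := by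
      apply MonoidHom.pi_ext
      intro i y
      have h1 : cj g (Pi.mulSingle i y)
          = Pi.mulSingle i ⟨g * y * g⁻¹, (hnorm i).conj_mem _ y.2 g⟩ := by
        ext j
        by_cases h : j = i
        · subst h; simp [cj]
        · simp [cj, h]
      simp [h1, hφs]
    exact DFunLike.congr_fun this v
  let M : Subgroup (∀ i, V i) := N.comap φ
  have hMcj : ∀ g, ∀ v ∈ M, cj g v ∈ M := by
    intro g v hv
    change φ (cj g v) ∈ N
    rw [hcj]
    exact hNn.conj_mem _ hv g
  let p : ∀ i, M →* V i := fun i => (Pi.evalMonoidHom (fun i => V i) i).comp M.subtype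
  have hbij : ∀ i, (∃ m, p i m ≠ 1) → Function.Bijective (p i) := by
    intro i hm
    obtain ⟨m, hm⟩ := hm
    constructor
    · -- the kernel is normal
      rw [← MonoidHom.ker_eq_bot_iff]
      let C : Subgroup G := (((p i).ker.map M.subtype)).map φ
      have hCN : C ≤ N := by
        rintro _ ⟨v, ⟨w, hw, rfl⟩, rfl⟩
        exact w.2
      have hCn : C.Normal := by
        constructor
        rintro _ ⟨v, ⟨w, hw, rfl⟩, rfl⟩ g
        refine ⟨cj g w, ⟨⟨cj g w, hMcj g _ w.2⟩, ?_, rfl⟩, hcj g _⟩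
        have hw1 : (w : ∀ i, V i) i = 1 := hw
        change (cj g w) i = 1
        ext
        simp [cj, hw1]
      by_cases hC : C = ⊥
      · rw [eq_bot_iff]
        intro w hw
        have h3 : φ w ∈ C := ⟨w, ⟨w, hw, rfl⟩, rfl⟩
        rw [hC, Subgroup.mem_bot] at h3
        have h4 : (w : ∀ i, V i) = 1 := hφi (by rw [h3, map_one])
        exact Subtype.ext h4
      · have hNC := hNmin ⟨hCn, hC⟩ hCN
        exfalso
        apply hm
        obtain ⟨v, ⟨w, hw, rfl⟩, hv⟩ := hNC m.2
        have : w = m := Subtype.ext (hφi hv)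
        rw [← this]
        exact hw
    · rw [← MonoidHom.range_eq_top]
      let C : Subgroup G := (p i).range.map (V i).subtype
      have hCV : C ≤ V i := by
        rintro _ ⟨v, _, rfl⟩
        exact v.2
      have hCn : C.Normal := by
        constructor
        rintro _ ⟨_, ⟨w, rfl⟩, rfl⟩ g
        exact ⟨_, ⟨⟨cj g w, hMcj g _ w.2⟩, rfl⟩, rfl⟩
      rcases (hmin i).2 C hCn hCV with h | h
      · exfalso
        apply hm
        have h3 : ((p i m : V i) : G) ∈ C := ⟨_, ⟨m, rfl⟩, rfl⟩
        rw [h, Subgroup.mem_bot] at h3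
        exact Subtype.ext h3
      · rw [eq_top_iff]
        intro y _
        have h3 : (y : G) ∈ C := by rw [h]; exact y.2
        obtain ⟨z, hz, hzy⟩ := h3
        have : z = y := Subtype.ext hzy
        rw [← this]
        exact hz
  obtain ⟨n, hnN, hn1⟩ : ∃ n ∈ N, n ≠ 1 := by
    by_contra! h
    exact hN1 ((Subgroup.eq_bot_iff_forall N).2 h)
  obtain ⟨v, hv⟩ : (n : G) ∈ φ.range := by rw [hφr]; exact hKV (hNK hnN)
  have hvM : v ∈ M := by change φ v ∈ N; rw [hv]; exact hnN
  have hvn : v ≠ 1 := by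
    rintro rfl
    apply hn1
    rw [← hv, map_one]
  obtain ⟨i, hi⟩ : ∃ i, v i ≠ 1 := by
    by_contra! h
    exact hvn (funext h)
  have hbi := hbij i ⟨⟨v, hvM⟩, hi⟩
  have htriv : ∀ j, j ≠ i → ∀ m, p j m = 1 := by
    intro j hj
    by_contra! h
    have hbj := hbij j h
    apply hnoniso i j hj.symm
    refine ⟨(MulEquiv.ofBijective (p i) hbi).symm.trans (MulEquiv.ofBijective (p j) hbj), ?_⟩
    intro g x
    obtain ⟨m, rfl⟩ := hbi.2 x
    have h1 : (⟨g * (p i m : V i) * g⁻¹, (hnorm i).conj_mem _ (p i m).2 g⟩ : V i)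
        = MulEquiv.ofBijective (p i) hbi ⟨cj g m, hMcj g _ m.2⟩ := rfl
    have h2 : p i m = MulEquiv.ofBijective (p i) hbi m := rfl
    simp only [MulEquiv.trans_apply]
    rw [h1, h2, MulEquiv.symm_apply_apply, MulEquiv.symm_apply_apply]
    rfl
  refine ⟨i, fun y hy => hNK ?_⟩
  obtain ⟨m, hm⟩ := hbi.2 ⟨y, hy⟩
  have h5 : (m : ∀ i, V i) = Pi.mulSingle i ⟨y, hy⟩ := by
    funext j
    by_cases h : j = i
    · subst h; rw [Pi.mulSingle_eq_same]; exact hm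
    · rw [Pi.mulSingle_eq_of_ne h]; exact htriv j h m
  have h6 : φ m ∈ N := m.2
  rwa [h5, hφs] at h6

/-- Let `G` be finite with a normal subgroup `V = V₁ × ⋯ × V_t`,
where the `V i` are abelian minimal normal subgroups of `G`, pairwise non-isomorphic as
`G`-modules. If `λ = λ₁ × ⋯ × λ_t` with each `λ i` a nontrivial linear character of
`V i`, then every `χ ∈ Irr(G)` lying over `λ` satisfies `ker χ ∩ V = 1` and
`|V| ∣ cod χ`. -/
theorem stmt11 {G : Type} [Group G] [Finite G] {t : ℕ} (V : Fin t → Subgroup G)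
    (hnorm : ∀ i, (V i).Normal)
    (hab : ∀ i, ∀ a ∈ V i, ∀ b ∈ V i, a * b = b * a)
    (hmin : ∀ i, V i ≠ ⊥ ∧ ∀ C : Subgroup G, C.Normal → C ≤ V i → C = ⊥ ∨ C = V i)
    (hindep : iSupIndep V)
    (hnoniso : ∀ i j, i ≠ j →
      ¬ ∃ e : ↥(V i) ≃* ↥(V j), ∀ (g : G) (x : ↥(V i)),
        (↑(e ⟨g * ↑x * g⁻¹, (hnorm i).conj_mem ↑x x.2 g⟩) : G) = g * (↑(e x) : G) * g⁻¹)
    (lam : ∀ i, ↥(V i) →* ℂˣ) (hlam : ∀ i, lam i ≠ 1)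
    (χ : FDRep ℂ G) [Simple χ]
    (hover : ∃ x : χ, x ≠ 0 ∧ ∀ (i : Fin t) (v : ↥(V i)),
      χ.ρ ↑v x = ((lam i v : ℂ) • x)) :
    repKer χ ⊓ (⨆ i, V i) = ⊥ ∧ Nat.card ↥(⨆ i, V i) ∣ cod χ := by
  obtain ⟨x, hx, hxv⟩ := hover
  have hker : ∀ g ∈ repKer χ, χ.ρ g = 1 := by
    intro g hg
    have h1 : Representation.asGroupHom χ.ρ g = 1 := hg
    have h2 := congrArg Units.val h1
    simpa [Representation.asGroupHom_apply] using h2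
  have hKn : (repKer χ).Normal := MonoidHom.normal_ker _
  have hVn : (⨆ i, V i).Normal := by
    constructor
    intro n hn g
    have h1 : (⨆ i, V i) ≤ (⨆ i, V i).comap (MulAut.conj g).toMonoidHom :=
      iSup_le fun i v hv => Subgroup.mem_iSup_of_mem i ((hnorm i).conj_mem v hv g)
    exact h1 hn
  have hbot : repKer χ ⊓ (⨆ i, V i) = ⊥ := by
    by_contra hne
    obtain ⟨i, hi⟩ := aux_min V hnorm hmin hindep hnoniso _
      (Subgroup.normal_inf_normal _ _) inf_le_right hne
    apply hlam i
    ext v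
    have h1 := hxv i v
    rw [hker _ (hi v.2).1, Module.End.one_apply] at h1
    have h2 : (1 : ℂ) • x = (lam i v : ℂ) • x := by rw [one_smul]; exact h1
    exact (smul_left_injective ℂ hx h2).symm
  refine ⟨hbot, ?_⟩
  let L : Subgroup G :=
    { carrier := {g | ∃ c : ℂˣ, χ.ρ g x = (c : ℂ) • x}
      one_mem' := ⟨1, by simp⟩
      mul_mem' := by
        rintro a b ⟨c, hc⟩ ⟨d, hd⟩
        refine ⟨c * d, ?_⟩
        rw [map_mul, Module.End.mul_apply, hd, map_smul, hc, smul_smul, mul_comm, Units.val_mul]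
      inv_mem' := by
        rintro a ⟨c, hc⟩
        refine ⟨c⁻¹, ?_⟩
        have h1 : χ.ρ a⁻¹ (χ.ρ a x) = x := by
          rw [← Module.End.mul_apply, ← map_mul]; simp
        rw [hc, map_smul] at h1
        conv_rhs => rw [← h1]
        rw [smul_smul]
        simp }
  have hL : (⨆ i, V i) ⊔ repKer χ ≤ L := by
    refine sup_le (iSup_le fun i v hv => ⟨lam i ⟨v, hv⟩, hxv i ⟨v, hv⟩⟩) fun g hg => ⟨1, ?_⟩
    rw [hker g hg]; simp
  have hito : Module.finrank ℂ χ ∣ ((⨆ i, V i) ⊔ repKer χ).index := by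
    refine aux_ito χ.ρ (fun T hT => aux_schur χ T hT) _ x hx ?_
    intro a ha
    obtain ⟨c, hc⟩ := hL ha
    exact ⟨c, hc⟩
  have hidx : (repKer χ).index = Nat.card ↥(⨆ i, V i) * ((⨆ i, V i) ⊔ repKer χ).index := by
    rw [← Subgroup.relIndex_mul_index (le_sup_right : repKer χ ≤ (⨆ i, V i) ⊔ repKer χ),
      Subgroup.relIndex_sup_right, ← Subgroup.inf_relIndex_right, hbot, Subgroup.relIndex_bot_left]
  rw [cod, hidx, Nat.mul_div_assoc _ hito]
  exact Dvd.intro _ rfl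
end

section
/- Let p, q, r be primes with p ≠ q and q ≠ r, and let G be a Frobenius group with complement P ≅ C_p and kernel Q ≅ C_q. If V is a faithful irreducible G-module over F_r, then either (1) V is irreducible as a Q-module and dim_{F_r}(V) equals the multiplicative order of r modulo q, or (2) V is not Q-irreducible and dim_{F_r}(V) equals p times the multiplicative order of r modulo q. -/
open CategoryTheory

/-- The restriction of a representation of `G` over `ZMod r` to a subgroup `M`. -/
noncomputable def resRepZMod {r : ℕ} [Fact r.Prime] {G : Type} [Group G]
    (M : Subgroup G) (V : FDRep (ZMod r) G) : FDRep (ZMod r) ↥M :=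
  FDRep.of ((V.ρ.comp M.subtype : ↥M →* _) : Representation (ZMod r) ↥M V)


theorem finrank_aux {r q : ℕ} [hr : Fact r.Prime] (hq : q.Prime)
    {K : Type*} [Field K] [Algebra (ZMod r) K] [Module.Finite (ZMod r) K] (y : K)
    (hy : y ^ q = 1) (hy1 : y ≠ 1) (hgen : Algebra.adjoin (ZMod r) {y} = ⊤) :
    Module.finrank (ZMod r) K = orderOf (r : ZMod q) := by
  have hord : orderOf y = q := by
    rcases (Nat.dvd_prime hq).1 (orderOf_dvd_of_pow_eq_one hy) with h | h
    · exact absurd (orderOf_eq_one_iff.1 h) hy1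
    · exact h
  have hy0 : y ≠ 0 := by
    rintro rfl
    simp [hq.ne_zero] at hy
  have key : ∀ m, y ^ (r ^ m) = y ↔ (r : ZMod q) ^ m = 1 := by
    intro m
    have h1 := pow_eq_pow_iff_modEq (x := Units.mk0 y hy0) (n := r ^ m) (m := 1)
    rw [← orderOf_units, Units.val_mk0, hord, pow_one, ← ZMod.natCast_eq_natCast_iff] at h1
    rw [Units.ext_iff] at h1
    simpa using h1
  have : Finite K := Module.finite_of_finite (ZMod r)
  rw [← FiniteField.orderOf_frobeniusAlgHom (ZMod r) K, orderOf_eq_orderOf_iff]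
  intro m
  rw [← key]
  have hap : ∀ x : K, ((FiniteField.frobeniusAlgHom (ZMod r) K) ^ m) x = x ^ (r ^ m) := by
    intro x
    rw [AlgHom.coe_pow, FiniteField.coe_frobeniusAlgHom, pow_iterate, ZMod.card]
  constructor
  · intro h
    rw [← hap, h]; rfl
  · intro h
    apply AlgHom.ext_of_adjoin_eq_top hgen
    intro x hx
    rw [Set.mem_singleton_iff.1 hx, hap, h]; rfl

theorem finrank_simple {r q : ℕ} [hr : Fact r.Prime] (hq : q.Prime)
    {A : Type*} [CommRing A] [Algebra (ZMod r) A] (y : A) (hy : y ^ q = 1)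
    (hgen : Algebra.adjoin (ZMod r) {y} = ⊤)
    {W : Type*} [AddCommGroup W] [Module (ZMod r) W] [Module A W] [IsScalarTower (ZMod r) A W]
    [Module.Finite (ZMod r) W] [IsSimpleModule A W] (hfix : ∀ w : W, y • w = w → w = 0) :
    Module.finrank (ZMod r) W = orderOf (r : ZMod q) := by
  obtain ⟨I, hI, ⟨e⟩⟩ := (isSimpleModule_iff_quot_maximal (R := A) (M := W)).1 inferInstance
  let := Ideal.Quotient.field I
  let e' : W ≃ₗ[ZMod r] A ⧸ I := e.restrictScalars (ZMod r)
  have : Module.Finite (ZMod r) (A ⧸ I) := Module.Finite.equiv e'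
  rw [e'.finrank_eq]
  apply finrank_aux hq (Ideal.Quotient.mk I y)
  · rw [← map_pow, hy, map_one]
  · intro h
    have h1 : e.symm 1 = 0 := by
      apply hfix
      rw [← map_smul]
      congr 1
      rw [Algebra.smul_def]
      simpa using h
    simp at h1
  · have := congrArg (Subalgebra.map (Ideal.Quotient.mkₐ (ZMod r) I)) hgen
    rw [AlgHom.map_adjoin, Algebra.map_top, Set.image_singleton] at this
    rw [← Ideal.Quotient.mkₐ_eq_mk (ZMod r), this]
    rw [AlgHom.range_eq_top]
    exact Ideal.Quotient.mkₐ_surjective _ _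

set_option linter.unusedSectionVars false

section core
variable {k A V P : Type*} [Field k] [CommRing A] [Algebra k A] [AddCommGroup V] [Module k V]
  [Module A V] [IsScalarTower k A V] [Module.Finite k V] [Group P] [Finite P]
  (σ : P →* (A ≃ₐ[k] A)) (τ : Representation k P V)

def conjSub (hτ : ∀ h a v, τ h (a • v) = σ h a • τ h v) (h : P) (S : Submodule A V) :
    Submodule A V where
  carrier := {v | τ h⁻¹ v ∈ S}
  add_mem' := by
    intro a b ha hb
    simp only [Set.mem_ofPred_eq, map_add] at *
    exact S.add_mem ha hb
  zero_mem' := by simp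
  smul_mem' := by
    intro c v hv
    simp only [Set.mem_ofPred_eq] at *
    rw [hτ]
    exact S.smul_mem _ hv

theorem finrank_conjSub (hτ : ∀ h a v, τ h (a • v) = σ h a • τ h v) (h : P) (S : Submodule A V) :
    Module.finrank k (conjSub σ τ hτ h S) = Module.finrank k S := by
  have e1 : ∀ v, τ h (τ h⁻¹ v) = v := by intro v; simp
  have e2 : ∀ v, τ h⁻¹ (τ h v) = v := by intro v; simp
  refine LinearEquiv.finrank_eq
    { toFun := fun v => ⟨τ h⁻¹ v.1, v.2⟩
      invFun := fun v => ⟨τ h v.1, show τ h⁻¹ (τ h v.1) ∈ S by rw [e2]; exact v.2⟩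
      map_add' := by intro a b; ext; simp
      map_smul' := by intro a b; ext; simp
      left_inv := by intro v; ext; simp
      right_inv := by intro v; ext; simp }

theorem core_homog (hτ : ∀ h a v, τ h (a • v) = σ h a • τ h v)
    (hirr : ∀ S : Submodule A V, (∀ h, ∀ v ∈ S, τ h v ∈ S) → S = ⊥ ∨ S = ⊤)
    (hfaith : ∀ h, h ≠ 1 → ∃ a : A, ∃ v : V, σ h a • v ≠ a • v)
    (I : Ideal A) [hI : I.IsMaximal] (hIV : ∀ a ∈ I, ∀ v : V, a • v = 0) [Nontrivial V] :
    IsSimpleModule A V := by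
  have : Fintype P := Fintype.ofFinite P
  let := Ideal.Quotient.field I
  have hT : Module.IsTorsionBySet A V I := by
    intro x a
    exact hIV a a.2 x
  let : Module (A ⧸ I) V := hT.module
  let χ : P → (A →* A ⧸ I) := fun h =>
    ((Ideal.Quotient.mk I : A →* A ⧸ I)).comp ((σ h : A →+* A) : A →* A)
  have hχ : ∀ h a, χ h a = Ideal.Quotient.mk I (σ h a) := fun _ _ => rfl
  have hχinj : Function.Injective χ := by
    intro g h hgh
    by_contra hne
    obtain ⟨a, v, hav⟩ := hfaith (g * h⁻¹) (by rwa [ne_eq, mul_inv_eq_one])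
    apply hav
    have h1 := DFunLike.congr_fun hgh (σ h⁻¹ a)
    rw [hχ, hχ, Ideal.Quotient.eq] at h1
    have h2 := hIV _ h1 v
    rw [sub_smul, sub_eq_zero] at h2
    simpa using h2
  have hli : LinearIndependent (A ⧸ I) (fun h => (χ h : A → A ⧸ I)) :=
    (linearIndependent_monoidHom A (A ⧸ I)).comp χ hχinj
  obtain ⟨w, hw⟩ := exists_ne (0 : V)
  obtain ⟨φ, hφ⟩ := Module.Projective.exists_dual_ne_zero (A ⧸ I) hw
  obtain ⟨a, ha⟩ : ∃ a : A, ∑ h, τ h (a • w) ≠ 0 := by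
    by_contra! hall
    have := Fintype.linearIndependent_iff.1 hli (fun h => φ (τ h w)) (by
      funext a
      have h1 := congrArg φ (hall a)
      rw [map_sum, map_zero] at h1
      rw [Finset.sum_apply, Pi.zero_apply, ← h1]
      refine Finset.sum_congr rfl fun h _ => ?_
      rw [hτ, Pi.smul_apply, hχ]
      have : σ h a • τ h w = (Ideal.Quotient.mk I (σ h a)) • τ h w := rfl
      rw [this, map_smul, smul_eq_mul, smul_eq_mul, mul_comm]) 1
    simp at this
    exact hφ this
  set v0 := ∑ h, τ h (a • w) with hv0
  have hfix : ∀ g, τ g v0 = v0 := by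
    intro g
    rw [hv0, map_sum]
    refine Fintype.sum_equiv (Equiv.mulLeft g) _ _ fun h => ?_
    simp
  have htop : Submodule.span A {v0} = ⊤ := by
    refine (hirr _ ?_).resolve_left ?_
    · intro h v hv
      obtain ⟨b, rfl⟩ := Submodule.mem_span_singleton.1 hv
      rw [hτ, hfix]
      exact Submodule.mem_span_singleton.2 ⟨_, rfl⟩
    · rwa [Submodule.span_singleton_eq_bot]
  let f : A →ₗ[A] V := LinearMap.toSpanSingleton A V v0
  have hfs : Function.Surjective f := by
    rw [← LinearMap.range_eq_top, LinearMap.range_toSpanSingleton, htop]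
  have hker : LinearMap.ker f = I := by
    symm
    apply hI.eq_of_le
    · rw [ne_eq, Ideal.eq_top_iff_one]
      intro h
      apply ha
      simpa [f] using h
    · intro b hb
      simp [f, hIV b hb]
  rw [isSimpleModule_iff_quot_maximal]
  refine ⟨I, hI, ⟨?_⟩⟩
  exact (LinearMap.quotKerEquivOfSurjective f hfs).symm.trans (Submodule.quotEquivOfEq _ _ hker)

theorem core (hτ : ∀ h a v, τ h (a • v) = σ h a • τ h v)
    (hp : (Nat.card P).Prime)
    (hirr : ∀ S : Submodule A V, (∀ h, ∀ v ∈ S, τ h v ∈ S) → S = ⊥ ∨ S = ⊤)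
    (hfaith : ∀ h, h ≠ 1 → ∃ a : A, ∃ v : V, σ h a • v ≠ a • v)
    [Nontrivial V] : ∃ W : Submodule A V, IsSimpleModule A W ∧
      ((IsSimpleModule A V ∧ Module.finrank k V = Module.finrank k W) ∨
       (¬ IsSimpleModule A V ∧ Module.finrank k V = Nat.card P * Module.finrank k W)) := by
  have : Fintype P := Fintype.ofFinite P
  have : IsArtinian A V := isArtinian_of_tower k inferInstance
  obtain ⟨W, hW, -⟩ := (eq_bot_or_exists_atom_le (⊤ : Submodule A V)).resolve_left top_ne_bot
  have hWs : IsSimpleModule A W := isSimpleModule_iff_isAtom.2 hW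
  refine ⟨W, hWs, ?_⟩
  have hWpos : 0 < Module.finrank k W := by
    have := IsSimpleModule.nontrivial A W
    have : Module.Finite k W :=
      inferInstanceAs (Module.Finite k (W.restrictScalars k))
    exact Module.finrank_pos
  have hs : IsSimpleModule A V → Module.finrank k V = Module.finrank k W := by
    intro h
    have : W = ⊤ := (eq_bot_or_eq_top W).resolve_left hW.1
    rw [this]
    exact (LinearEquiv.finrank_eq (Submodule.topEquiv (R := k) (M := V))).symm
  let C : P → Submodule A V := fun h => conjSub σ τ hτ h W
  have hCmem : ∀ h v, v ∈ C h ↔ τ h⁻¹ v ∈ W := fun _ _ => Iff.rfl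
  have hCtop : ⨆ h, C h = ⊤ := by
    refine (hirr _ ?_).resolve_left ?_
    · intro g v hv
      induction hv using Submodule.iSup_induction' with
      | mem h x hx =>
        apply Submodule.mem_iSup_of_mem (g * h)
        rw [hCmem] at hx ⊢
        simpa using hx
      | zero => simp
      | add x y _ _ hx hy => rw [map_add]; exact Submodule.add_mem _ hx hy
    · intro h
      have h1 : C 1 ≤ ⊥ := h ▸ le_iSup C 1
      apply hW.1
      rw [eq_bot_iff]
      intro w hw
      apply h1
      rw [hCmem]
      simpa using hw
  let I : Ideal A := Module.annihilator A W
  have hI : I.IsMaximal := IsSimpleModule.annihilator_isMaximal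
  let J : P → Ideal A := fun h => I.comap (σ h⁻¹)
  have hJmem : ∀ h a, a ∈ J h ↔ σ h⁻¹ a ∈ I := fun _ _ => Iff.rfl
  have hJmax : ∀ h, (J h).IsMaximal := fun h =>
    Ideal.comap_isMaximal_of_surjective (σ h⁻¹) (σ h⁻¹).surjective
  have hCJ : ∀ h, C h ≤ Submodule.torsionBySet A V (J h) := by
    intro h v hv
    rw [Submodule.mem_torsionBySet_iff]
    rintro ⟨a, ha⟩
    have ha' := (hJmem h a).1 ha
    rw [hCmem] at hv
    have h1 : τ h⁻¹ (a • v) = 0 := by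
      rw [hτ]
      exact congrArg Subtype.val (Module.mem_annihilator.1 ha' ⟨_, hv⟩)
    have h2 := congrArg (τ h) h1
    simpa using h2
  by_cases hinj : Function.Injective J
  · right
    have hdim : Module.finrank k V = Nat.card P * Module.finrank k W := by
      have hind : iSupIndep C := by
        have := Submodule.supIndep_torsionBySet_ideal (M := V) (S := Finset.univ) (p := J) (by
          intro i _ j _ hij
          exact Ideal.isCoprime_iff_sup_eq.1 (Ideal.isCoprime_of_isMaximal (fun h => hij (hinj h))))
        exact (iSupIndep_iff_supIndep_univ.2 this).mono hCJ
      classical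
      have hdecomp : DirectSum.IsInternal C :=
        DirectSum.isInternal_submodule_of_iSupIndep_of_iSup_eq_top hind hCtop
      have hdecomp' : DirectSum.IsInternal (fun h => (C h).restrictScalars k) := hdecomp
      rw [Module.finrank_eq_card_basis (hdecomp'.collectedBasis (fun h => Module.finBasis k _))]
      rw [Fintype.card_sigma]
      simp only [Fintype.card_fin]
      refine (Finset.sum_congr rfl (fun h _ => finrank_conjSub σ τ hτ h W)).trans ?_
      simp
    refine ⟨fun h => ?_, hdim⟩
    rw [hs h] at hdim
    nlinarith [hp.two_le]
  · left
    have : IsSimpleModule A V := by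
      let St : Subgroup P :=
        { carrier := {g | ∀ a, σ g a ∈ I ↔ a ∈ I}
          one_mem' := by intro a; simp
          mul_mem' := by
            intro g h hg hh a
            rw [map_mul, AlgEquiv.mul_apply, hg, hh]
          inv_mem' := by
            intro g hg a
            rw [← hg]
            simp }
      have hSt : St = ⊤ := by
        have : Fact (Nat.card P).Prime := ⟨hp⟩
        refine (Subgroup.eq_bot_or_eq_top_of_prime_card St).resolve_left ?_
        intro hb
        apply hinj
        intro g h hgh
        have : g⁻¹ * h ∈ St := by
          intro a
          have h1 := hJmem g (σ h a)
          rw [hgh, hJmem] at h1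
          simpa using h1.symm
        rw [hb, Subgroup.mem_bot, inv_mul_eq_one] at this
        exact this
      refine core_homog σ τ hτ hirr hfaith I ?_
      intro a ha v
      have hall : ∀ h, C h ≤ Submodule.torsionBySet A V I := by
        intro h
        refine (hCJ h).trans (Submodule.torsionBySet_le_torsionBySet_of_subset ?_)
        intro b hb
        have : h⁻¹ ∈ St := hSt ▸ trivial
        exact (this b).2 hb
      have h2 : v ∈ ⨆ h, C h := hCtop ▸ trivial
      have h3 := iSup_le hall h2
      rw [Submodule.mem_torsionBySet_iff] at h3
      exact h3 ⟨a, ha⟩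
    exact ⟨this, hs this⟩

end core

theorem fdrep_simple_iff {k : Type} [Field k] {G : Type} [Group G] (V : FDRep k G) :
    Simple V ↔ (Nontrivial V ∧ ∀ S : Submodule k V, (∀ g, ∀ v ∈ S, V.ρ g v ∈ S) → S = ⊥ ∨ S = ⊤) := by
  let F := forget₂ (FDRep k G) (Rep k G)
  constructor
  · intro h
    constructor
    · by_contra hn
      rw [not_nontrivial_iff_subsingleton] at hn
      apply id_nonzero V
      ext x
      exact Subsingleton.elim _ _
    · intro S hS
      let W : FDRep k G := FDRep.of (V := S)
        { toFun := fun g => (V.ρ g).restrict (hS g)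
          map_one' := by ext; simp
          map_mul' := by intro a b; ext; simp }
      let f : W ⟶ V := ⟨InducedCategory.homMk (ModuleCat.ofHom S.subtype), fun g => by
        ext1; rfl⟩
      have : Mono (F.map f) := (Rep.mono_iff_injective _).2 Subtype.val_injective
      have : Mono f := F.mono_of_mono_map this
      by_cases hf : f = 0
      · left
        rw [eq_bot_iff]
        intro v hv
        have := congrArg (fun t : W ⟶ V => t.hom.hom.hom (⟨v, hv⟩ : S)) hf
        exact this
      · right
        have : IsIso f := isIso_of_mono_of_nonzero hf
        have : Epi (F.map f) := inferInstance
        have := (Rep.epi_iff_surjective _).1 this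
        rw [eq_top_iff]
        intro v _
        obtain ⟨w, hw⟩ := this v
        have h2 : (S.subtype w) = v := hw
        rw [← h2]; exact w.2
  · rintro ⟨hn, h⟩
    constructor
    intro Y f hm
    have hinj : Function.Injective (F.map f) := (Rep.mono_iff_injective _).1 inferInstance
    constructor
    · intro hi h0
      have : Epi (F.map f) := inferInstance
      have hs := (Rep.epi_iff_surjective _).1 this
      obtain ⟨v, hv⟩ := exists_ne (0 : V)
      obtain ⟨w, hw⟩ := hs v
      subst h0
      exact hv hw.symm
    · intro hf
      have hs : Function.Surjective (F.map f) := by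
        let S : Submodule k V := LinearMap.range (f.hom.hom.hom)
        rcases h S (by
          rintro g v ⟨w, rfl⟩
          exact ⟨Y.ρ g w, (Rep.hom_comm_apply (F.map f) g w)⟩) with h | h
        · exfalso
          apply hf
          ext x
          have : f.hom.hom.hom x ∈ S := ⟨x, rfl⟩
          rw [h] at this
          exact this
        · intro v
          have : v ∈ S := h ▸ trivial
          exact this
      have : Mono (F.map f) := inferInstance
      have : Epi (F.map f) := (Rep.epi_iff_surjective _).2 hs
      have : IsIso (F.map f) := isIso_of_mono_of_epi _
      exact isIso_of_reflects_iso f F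

theorem unbundled {p q r : ℕ} (hp : p.Prime) (hq : q.Prime) [hr : Fact r.Prime]
    {G : Type} [Group G] [Finite G] (Q P : Subgroup G)
    (hQnorm : Q.Normal) (hQcard : Nat.card ↥Q = q) (hPcard : Nat.card ↥P = p)
    (hcompl : Q.IsComplement' P)
    (hfrob : ∀ h ∈ P, h ≠ 1 → ∀ n ∈ Q, n ≠ 1 → h * n ≠ n * h)
    {V : Type} [AddCommGroup V] [Module (ZMod r) V] [Module.Finite (ZMod r) V]
    (ρ : Representation (ZMod r) G V) [Nontrivial V]
    (hirr : ∀ S : Submodule (ZMod r) V, (∀ g, ∀ v ∈ S, ρ g v ∈ S) → S = ⊥ ∨ S = ⊤)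
    (hfaith : Function.Injective ρ) :
    ((∀ S : Submodule (ZMod r) V, (∀ g : Q, ∀ v ∈ S, ρ g v ∈ S) → S = ⊥ ∨ S = ⊤) ∧
        Module.finrank (ZMod r) V = orderOf (r : ZMod q)) ∨
      (¬ (∀ S : Submodule (ZMod r) V, (∀ g : Q, ∀ v ∈ S, ρ g v ∈ S) → S = ⊥ ∨ S = ⊤) ∧
        Module.finrank (ZMod r) V = p * orderOf (r : ZMod q)) := by
  have : Fact q.Prime := ⟨hq⟩
  have hcyc : IsCyclic Q := isCyclic_of_prime_card hQcard
  let cQ : CommGroup Q := { (inferInstance : Group Q) with mul_comm := hcyc.commGroup.mul_comm }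
  obtain ⟨y, hy⟩ := hcyc.exists_generator
  have hy1 : y ≠ 1 := by
    rintro rfl
    have : Subsingleton Q := ⟨fun a b => by
      have ha := hy a; have hb := hy b
      simp at ha hb
      rw [ha, hb]⟩
    rw [Nat.card_of_subsingleton (1 : Q)] at hQcard
    exact hq.one_lt.ne hQcard
  have hyq : y ^ q = 1 := by rw [← hQcard]; exact pow_card_eq_one'
  -- factorisation
  have hfac : ∀ g : G, ∃ n : Q, ∃ h : P, g = n * h := by
    intro g
    obtain ⟨⟨n, h⟩, hnh⟩ := hcompl.2 g
    exact ⟨n, h, hnh.symm⟩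
  let ρQ : Representation (ZMod r) Q V := ρ.comp Q.subtype
  let τ : Representation (ZMod r) P V := ρ.comp P.subtype
  have hρQ : ∀ n v, ρQ n v = ρ (n : G) v := fun _ _ => rfl
  have hτρ : ∀ n v, τ n v = ρ (n : G) v := fun _ _ => rfl
  let A := MonoidAlgebra (ZMod r) Q
  let : Module A V := Module.compHom V (ρQ.asAlgebraHom : A →+* Module.End (ZMod r) V)
  have hsmul : ∀ (a : A) (v : V), a • v = ρQ.asAlgebraHom a v := fun _ _ => rfl
  have hof : ∀ (n : Q) (v : V), (MonoidAlgebra.of (ZMod r) Q n : A) • v = ρ (n : G) v := by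
    intro n v
    rw [hsmul, Representation.asAlgebraHom_of, hρQ]
  have : IsScalarTower (ZMod r) A V := ⟨by
    intro c a v
    rw [hsmul, hsmul, map_smul]; rfl⟩
  let c : P →* MulAut Q := (MulAut.conjNormal (H := Q)).comp P.subtype
  have hc : ∀ h n, ((c h n : Q) : G) = h * n * (h : G)⁻¹ := by
    intro h n
    exact MulAut.conjNormal_apply _ _
  let σ : P →* (A ≃ₐ[ZMod r] A) :=
    { toFun := fun h => MonoidAlgebra.domCongr (ZMod r) (ZMod r) (c h)
      map_one' := by
        ext x
        simp
        rfl
      map_mul' := by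
        intro g h
        apply AlgEquiv.ext
        intro x
        induction x using MonoidAlgebra.induction_linear with
        | zero => simp
        | add x y hx hy => rw [map_add, map_add, hx, hy]
        | single a b => simp [AlgEquiv.mul_apply] }
  have hσ : ∀ h n, σ h (MonoidAlgebra.of (ZMod r) Q n) = MonoidAlgebra.of (ZMod r) Q (c h n) := by
    intro h n
    exact MonoidAlgebra.domCongr_single (R := ZMod r) (c h) n (1 : ZMod r)
  have hind : ∀ (pr : A → Prop), (∀ n, pr (MonoidAlgebra.of (ZMod r) Q n)) →
      (∀ a b, pr a → pr b → pr (a + b)) → (∀ (c : ZMod r) a, pr a → pr (c • a)) → ∀ a, pr a := by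
    intro pr h1 h2 h3 a
    exact MonoidAlgebra.induction_on a h1 h2 h3
  have hτ : ∀ h a v, τ h (a • v) = σ h a • τ h v := by
    intro h a v
    refine hind (fun a => τ h (a • v) = σ h a • τ h v) ?_ ?_ ?_ a
    · intro n
      rw [hσ, hof, hof, hτρ, hτρ, hc, ← Module.End.mul_apply, ← Module.End.mul_apply, ← map_mul,
        ← map_mul]
      congr 2
      group
    · intro a b ha hb
      simp only [add_smul, map_add, ha, hb]
    · intro c a ha
      simp only [smul_assoc, map_smul, ha]
  have hstable : ∀ (S : Submodule (ZMod r) V), (∀ g : Q, ∀ v ∈ S, ρ g v ∈ S) →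
      ∃ S' : Submodule A V, ∀ v, v ∈ S' ↔ v ∈ S := by
    intro S hS
    refine ⟨{ S with smul_mem' := ?_ }, fun v => Iff.rfl⟩
    intro a v hv
    refine hind (fun a => a • v ∈ S) ?_ ?_ ?_ a
    · intro n; rw [hof]; exact hS n v hv
    · intro a b ha hb; rw [add_smul]; exact S.add_mem ha hb
    · intro c a ha; rw [smul_assoc]; exact S.smul_mem c ha
  have hirrA : ∀ S : Submodule A V, (∀ h, ∀ v ∈ S, τ h v ∈ S) → S = ⊥ ∨ S = ⊤ := by
    intro S hS
    have := hirr (S.restrictScalars (ZMod r)) (by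
      intro g v hv
      obtain ⟨n, h, rfl⟩ := hfac g
      rw [map_mul, Module.End.mul_apply, ← hof]
      exact S.smul_mem _ (hS h v hv))
    simpa using this
  have hsimple : IsSimpleModule A V ↔
      (∀ S : Submodule (ZMod r) V, (∀ g : Q, ∀ v ∈ S, ρ g v ∈ S) → S = ⊥ ∨ S = ⊤) := by
    constructor
    · intro h S hS
      obtain ⟨S', hS'⟩ := hstable S hS
      rcases eq_bot_or_eq_top S' with h | h
      · left; ext v; rw [← hS', h]; simp
      · right; ext v; rw [← hS', h]; simp
    · intro h
      rw [isSimpleModule_iff]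
      refine { eq_bot_or_eq_top := fun S => ?_ }
      have := h (S.restrictScalars (ZMod r)) (by
        intro g v hv
        rw [← hof]
        exact S.smul_mem _ hv)
      simpa using this
  have hfix : ∀ v : V, ρ (y : G) v = v → v = 0 := by
    have hall : ∀ v, ρ (y : G) v = v → ∀ n : Q, ρ (n : G) v = v := by
      intro v hv n
      obtain ⟨m, rfl⟩ := (mem_powers_iff_mem_zpowers.2 (hy n))
      induction m with
      | zero => simp
      | succ m ih =>
        simp only [pow_succ, Subgroup.coe_mul, map_mul, Module.End.mul_apply, hv]
        exact ih
    let F : Submodule (ZMod r) V :=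
      { carrier := {v | ∀ n : Q, ρ (n : G) v = v}
        add_mem' := by intro a b ha hb n; rw [map_add, ha n, hb n]
        zero_mem' := by intro n; simp
        smul_mem' := by intro c a ha n; rw [map_smul, ha n] }
    rcases hirr F (by
      intro g v hv n
      have h1 := hv ⟨g⁻¹ * n * g, by simpa using hQnorm.conj_mem n n.2 g⁻¹⟩
      simp only at h1
      conv_rhs => rw [← h1]
      rw [← Module.End.mul_apply, ← Module.End.mul_apply, ← map_mul, ← map_mul]
      congr 2
      group) with h | h
    · intro v hv
      have : v ∈ F := hall v hv
      rw [h] at this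
      simpa using this
    · exfalso
      apply hy1
      apply Subtype.ext
      apply hfaith
      ext v
      have : v ∈ F := h ▸ trivial
      rw [this y]; simp
  have hfaithA : ∀ h, h ≠ 1 → ∃ a : A, ∃ v : V, σ h a • v ≠ a • v := by
    intro h hh
    by_contra! hcon
    refine hfrob h h.2 (by simpa using hh) y y.2 (by simpa using hy1) ?_
    rw [← mul_inv_eq_iff_eq_mul, ← hc]
    apply hfaith
    ext v
    have := hcon (MonoidAlgebra.of (ZMod r) Q y) v
    rwa [hσ, hof, hof] at this
  obtain ⟨W, hW, hor⟩ := core σ τ hτ (hPcard ▸ hp) hirrA hfaithA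
  have : Module.Finite (ZMod r) W :=
    inferInstanceAs (Module.Finite (ZMod r) (W.restrictScalars (ZMod r)))
  have hd : Module.finrank (ZMod r) W = orderOf (r : ZMod q) := by
    apply finrank_simple hq (MonoidAlgebra.of (ZMod r) Q y : A) (A := A)
    · rw [← map_pow, hyq, map_one]
    · rw [eq_top_iff]
      intro a _
      refine hind (fun a => a ∈ Algebra.adjoin (ZMod r) {(MonoidAlgebra.of (ZMod r) Q y : A)})
        ?_ ?_ ?_ a
      · intro n
        obtain ⟨m, rfl⟩ := (mem_powers_iff_mem_zpowers.2 (hy n))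
        simp only [map_pow]
        exact pow_mem (Algebra.self_mem_adjoin_singleton _ _) m
      · intro a b ha hb; exact add_mem ha hb
      · intro c a ha; exact Subalgebra.smul_mem _ ha c
    · intro w hw
      apply Subtype.ext
      apply hfix
      rw [← hof]
      exact congrArg Subtype.val hw
  rw [hsimple, hd, hPcard] at hor
  exact hor

/-- Let `p, q, r` be primes with `p ≠ q`, `q ≠ r`, and let `G` be a
Frobenius group with complement `P ≅ C_p` and kernel `Q ≅ C_q`. If `V` is a faithful
irreducible `G`-module over `F_r`, then either `V` is `Q`-irreducible and
`dim V = ord_q(r)`, or `V` is not `Q`-irreducible and `dim V = p * ord_q(r)`. -/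
theorem stmt14 {p q r : ℕ} (hp : p.Prime) (hq : q.Prime) [hr : Fact r.Prime]
    (hpq : p ≠ q) (hqr : q ≠ r)
    {G : Type} [Group G] [Finite G] (Q P : Subgroup G)
    (hQnorm : Q.Normal) (hQcard : Nat.card ↥Q = q) (hPcard : Nat.card ↥P = p)
    (hcompl : Q.IsComplement' P)
    (hfrob : ∀ h ∈ P, h ≠ 1 → ∀ n ∈ Q, n ≠ 1 → h * n ≠ n * h)
    (V : FDRep (ZMod r) G) [Simple V] (hfaith : Function.Injective V.ρ) :
    (Simple (resRepZMod Q V) ∧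
        Module.finrank (ZMod r) V = orderOf (r : ZMod q)) ∨
      (¬ Simple (resRepZMod Q V) ∧
        Module.finrank (ZMod r) V = p * orderOf (r : ZMod q)) := by
  obtain ⟨hn, hirr⟩ := (fdrep_simple_iff V).1 inferInstance
  have h := unbundled hp hq Q P hQnorm hQcard hPcard hcompl hfrob V.ρ hirr hfaith
  have hs : Simple (resRepZMod Q V) ↔
      (∀ S : Submodule (ZMod r) V, (∀ g : Q, ∀ v ∈ S, V.ρ g v ∈ S) → S = ⊥ ∨ S = ⊤) := by
    rw [fdrep_simple_iff]
    exact ⟨fun h => h.2, fun h => ⟨hn, h⟩⟩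
  rw [hs]
  exact h
end
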